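/- arXiv:1506.03628 — 2 statements merged into one kernel-verified Lean document; each statement's English description precedes it below -/
import Mathlib

section
/- Let N ≥ 2 be an integer, ω > 0, and 1 < p < p_max, let k ≥ 2 be an integer, and let U : [0,∞) → (0,∞) be the radial profile of a ground-state profile u of (QLS). Suppose v : [0,∞) → ℝ is continuous, twice continuously differentiable on (0,∞), satisfies ∫₀^∞ (v(r)² + v'(r)²) r^{N−1} dr < ∞, and solves L₊,ₖ v = 0 on (0,∞) (the radial linearized equation with angular eigenvalue λ_k = k(N+k−2)). Then v is identically zero. -/
open MeasureTheory Real Filter Topology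

noncomputable section

/-- Partial derivative along the `i`-th coordinate direction. -/
def pd {N : ℕ} {F : Type*} [NormedAddCommGroup F] [NormedSpace ℝ F]
    (i : Fin N) (f : EuclideanSpace ℝ (Fin N) → F) (x : EuclideanSpace ℝ (Fin N)) : F :=
  fderiv ℝ f x (EuclideanSpace.single i 1)

/-- Euclidean Laplacian. -/
def lap {N : ℕ} {F : Type*} [NormedAddCommGroup F] [NormedSpace ℝ F]
    (f : EuclideanSpace ℝ (Fin N) → F) (x : EuclideanSpace ℝ (Fin N)) : F :=
  ∑ i : Fin N, pd i (pd i f) x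

/-- Squared norm of the gradient of a real-valued function: `|∇f|²`. -/
def gradsq {N : ℕ} (f : EuclideanSpace ℝ (Fin N) → ℝ) (x : EuclideanSpace ℝ (Fin N)) : ℝ :=
  ∑ i : Fin N, (pd i f x) ^ 2

/-- A ground-state profile of the quasilinear Schrödinger equation (QLS)
`-Δu - uΔ(u²) + ωu - u^p = 0` on `ℝ^N`: smooth, positive, radially symmetric with a
strictly decreasing positive profile, solves (QLS) pointwise, and decays
exponentially together with all its derivatives. -/
structure IsGroundState (N : ℕ) (ω p : ℝ) (u : EuclideanSpace ℝ (Fin N) → ℝ) : Prop where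
  smooth : ContDiff ℝ (⊤ : ℕ∞) u
  pos : ∀ x, 0 < u x
  radial : ∃ U : ℝ → ℝ, StrictAntiOn U (Set.Ici 0) ∧ (∀ r, 0 ≤ r → 0 < U r) ∧
      ∀ x, u x = U ‖x‖
  solves : ∀ x, -lap u x - u x * lap (fun y => (u y) ^ 2) x + ω * u x - (u x) ^ p = 0
  decay : ∀ k : ℕ, ∃ C > 0, ∃ δ > 0, ∀ x,
      ‖iteratedFDeriv ℝ k u x‖ ≤ C * Real.exp (-δ * ‖x‖)

/-- The linearized operator `L₊` around `u` (real-valued functions). -/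
def Lplus {N : ℕ} (ω p : ℝ) (u η : EuclideanSpace ℝ (Fin N) → ℝ)
    (x : EuclideanSpace ℝ (Fin N)) : ℝ :=
  -lap η x - 2 * u x * lap (fun y => u y * η y) x + ω * η x
    - (lap (fun y => (u y) ^ 2) x + p * u x ^ (p - 1)) * η x

/-- The linearized operator `L₋` around `u`. -/
def Lminus {N : ℕ} (ω p : ℝ) (u ζ : EuclideanSpace ℝ (Fin N) → ℝ)
    (x : EuclideanSpace ℝ (Fin N)) : ℝ :=
  -lap ζ x + ω * ζ x - (lap (fun y => (u y) ^ 2) x + u x ^ (p - 1)) * ζ x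

/-- Radial Laplacian `Δ_r f (r) = f''(r) + ((N-1)/r) f'(r)`. -/
def lapRad (N : ℕ) (f : ℝ → ℝ) (r : ℝ) : ℝ :=
  deriv (deriv f) r + ((N : ℝ) - 1) / r * deriv f r

/-- The radial linearized operator `L₊,ₖ` with angular eigenvalue `λ_k = k(N+k-2)`. -/
def LplusRad (N : ℕ) (ω p : ℝ) (U : ℝ → ℝ) (k : ℕ) (v : ℝ → ℝ) (r : ℝ) : ℝ :=
  -(1 + 2 * U r ^ 2) *
      (deriv (deriv v) r + ((N : ℝ) - 1) / r * deriv v r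
        - (k : ℝ) * ((N : ℝ) + (k : ℝ) - 2) / r ^ 2 * v r)
    - 4 * U r * deriv U r * deriv v r + ω * v r
    - (2 * U r * lapRad N U r + lapRad N (fun s => U s ^ 2) r + p * U r ^ (p - 1)) * v r

/-- The radial linearized operator `L₋,ₖ` with angular eigenvalue `λ_k = k(N+k-2)`. -/
def LminusRad (N : ℕ) (ω p : ℝ) (U : ℝ → ℝ) (k : ℕ) (v : ℝ → ℝ) (r : ℝ) : ℝ :=
  -deriv (deriv v) r - ((N : ℝ) - 1) / r * deriv v r
    + (k : ℝ) * ((N : ℝ) + (k : ℝ) - 2) / r ^ 2 * v r + ω * v r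
    - (lapRad N (fun s => U s ^ 2) r + U r ^ (p - 1)) * v r

/-!
Differentiating (QLS) in the radial variable shows that `w = U'` solves the linearized equation with
angular eigenvalue `N - 1 = λ₁`. If `v` solves it with `lam > N - 1`, the weighted Wronskian
`W = r^{N-1} (1 + 2U²) (v' w - v w')` satisfies `W' = (lam - (N - 1)) r^{N-3} (1 + 2U²) v w`.
Consequently `F = W arctan (v / w)` has derivative at least `W' arctan (v / w) ≥ 0`,
while `|F| ≤ (π / 2) |W|`. Finite energy makes `W` small along some sequence tending to `0` and some
sequence tending to `∞`, so the monotone function `F` vanishes, and then so does `v` wherever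
`w ≠ 0`. These points are dense because `U` is strictly decreasing.

The bounded function `arctan` in place of the quotient `v / w` avoids any a priori information on
the zeros of `U'`: since `U' ≤ 0`, a zero of `U'` is also a zero of `U''`, hence of `W`.
-/

section IntegrableDecay

variable {E F : Type*} [NormedAddCommGroup E] [NormedSpace ℝ E] [NormedAddCommGroup F]

lemma frequently_abs_lt_of_smul_deriv_isBigO {f : ℝ → E} {g : ℝ → ℝ} {h : ℝ → F}
    {s : Set ℝ} {l : Filter ℝ} [l.NeBot] [TendstoIxxClass Set.Icc l l] (hs : s ∈ l)
    (hf : ∀ᶠ x in l, DifferentiableAt ℝ f x) (hf_top : Tendsto (fun x => ‖f x‖) l atTop)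
    (hh : IntegrableOn h s) (hgh : (fun x => g x • deriv f x) =O[l] h) {ε : ℝ} (hε : 0 < ε) :
    ∃ᶠ x in l, |g x| < ε := by
  intro hg
  refine not_integrableOn_of_tendsto_norm_atTop_of_deriv_isBigO_filter l hs hf hf_top ?_ hh
  refine Asymptotics.IsBigO.trans (.of_bound ε⁻¹ ?_) hgh
  filter_upwards [hg] with x hx
  rw [norm_smul, ← mul_assoc, Real.norm_eq_abs]
  exact le_mul_of_one_le_left (norm_nonneg _) ((one_le_inv_mul₀ hε).2 (not_lt.1 hx))

lemma frequently_abs_lt_atTop_of_isBigO {g : ℝ → ℝ} {h : ℝ → F} {b : ℝ}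
    (hh : IntegrableOn h (Set.Ioi b)) (hgh : g =O[atTop] h) {ε : ℝ} (hε : 0 < ε) :
    ∃ᶠ x in atTop, |g x| < ε :=
  frequently_abs_lt_of_smul_deriv_isBigO (f := id) (Ioi_mem_atTop b)
    (.of_forall fun _ => differentiableAt_id) tendsto_norm_atTop_atTop hh
    (by simpa using hgh) hε

lemma frequently_abs_lt_nhdsGT_zero_of_isBigO {g : ℝ → ℝ} {h : ℝ → F} {b : ℝ} (hb : 0 < b)
    (hh : IntegrableOn h (Set.Ioo 0 b)) (hgh : (fun x => g x * x⁻¹) =O[𝓝[>] 0] h)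
    {ε : ℝ} (hε : 0 < ε) : ∃ᶠ x in 𝓝[>] 0, |g x| < ε := by
  refine frequently_abs_lt_of_smul_deriv_isBigO (f := Real.log) (Ioo_mem_nhdsGT hb) ?_
    (tendsto_abs_atBot_atTop.comp Real.tendsto_log_nhdsGT_zero) hh (by simpa using hgh) hε
  filter_upwards [self_mem_nhdsWithin] with x hx
  exact Real.differentiableAt_log (Set.mem_Ioi.1 hx).ne'

lemma integrableOn_sq_mul_pow_of_abs_le_exp {f : ℝ → ℝ} {C δ : ℝ} (hδ : 0 < δ)
    (hf : ContinuousOn f (Set.Ioi 0)) (hfC : ∀ r, 0 < r → |f r| ≤ C * Real.exp (-δ * r)) (n : ℕ) :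
    IntegrableOn (fun r => f r ^ 2 * r ^ n) (Set.Ioi 0) := by
  have hexp : IntegrableOn (fun r : ℝ => C ^ 2 * (r ^ (n : ℝ) * Real.exp (-(2 * δ) * r ^ (1 : ℝ))))
      (Set.Ioi 0) :=
    (integrableOn_rpow_mul_exp_neg_mul_rpow (by linarith [n.cast_nonneg (α := ℝ)]) one_pos
      (by positivity)).const_mul _
  refine hexp.mono' (((hf.pow 2).mul (continuous_pow n).continuousOn).aestronglyMeasurable
    measurableSet_Ioi) ((ae_restrict_iff' measurableSet_Ioi).2 (.of_forall fun r hr => ?_))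
  have hr0 : 0 < r := hr
  have hsq : f r ^ 2 ≤ C ^ 2 * Real.exp (-(2 * δ) * r) :=
    calc f r ^ 2 = |f r| ^ 2 := (sq_abs _).symm
      _ ≤ (C * Real.exp (-δ * r)) ^ 2 := pow_le_pow_left₀ (abs_nonneg _) (hfC r hr0) 2
      _ = C ^ 2 * Real.exp (-(2 * δ) * r) := by
        rw [mul_pow, ← Real.exp_nat_mul]; congr 2; push_cast; ring
  rw [Real.norm_of_nonneg (by positivity), Real.rpow_natCast, Real.rpow_one]
  calc f r ^ 2 * r ^ n ≤ C ^ 2 * Real.exp (-(2 * δ) * r) * r ^ n := by gcongr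
    _ = _ := by ring

end IntegrableDecay

/-! ### Sturm comparison -/

section Sturm

/-- The Wronskian of `v` and `w` weighted by the coefficient `a` of a Sturm–Liouville operator
`f ↦ -(a f')' + q f`. -/
def weightedWronskian (a v w : ℝ → ℝ) (r : ℝ) : ℝ :=
  a r * (deriv v r * w r - v r * deriv w r)

/-- The product of the weighted Wronskian with `arctan (v / w)`, a monotone quantity in the Sturm
comparison of `v` with `w`. Since `v r / 0 = 0`, it vanishes at the zeros of `w`. -/
def sturmFunctional (a v w : ℝ → ℝ) (r : ℝ) : ℝ :=
  weightedWronskian a v w r * Real.arctan (v r / w r)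

variable {a v w : ℝ → ℝ} {r : ℝ}

lemma abs_sturmFunctional_le (a v w : ℝ → ℝ) (r : ℝ) :
    |sturmFunctional a v w r| ≤ |weightedWronskian a v w r| * (π / 2) := by
  rw [sturmFunctional, abs_mul]
  gcongr
  exact abs_le.2 ⟨(Real.neg_pi_div_two_lt_arctan _).le, (Real.arctan_lt_pi_div_two _).le⟩

lemma mul_arctan_pos {t : ℝ} (ht : t ≠ 0) : 0 < t * Real.arctan t := by
  rcases ht.lt_or_gt with hneg | hpos
  · exact mul_pos_of_neg_of_neg hneg (Real.arctan_lt_zero.2 hneg)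
  · exact mul_pos hpos (Real.arctan_pos.2 hpos)

lemma mul_mul_arctan_div_pos {x y : ℝ} (hx : x ≠ 0) (hy : y ≠ 0) :
    0 < x * y * Real.arctan (x / y) := by
  have hfactor : x * y * Real.arctan (x / y) = y ^ 2 * (x / y * Real.arctan (x / y)) := by
    field_simp
  rw [hfactor]
  have := mul_arctan_pos (div_ne_zero hx hy)
  positivity

lemma mul_mul_arctan_div_nonneg (x y : ℝ) : 0 ≤ x * y * Real.arctan (x / y) := by
  rcases eq_or_ne x 0 with rfl | hx
  · simp
  rcases eq_or_ne y 0 with rfl | hy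
  · simp
  exact (mul_mul_arctan_div_pos hx hy).le

lemma hasDerivAt_sturmFunctional_of_ne_zero {D : ℝ} (hv : DifferentiableAt ℝ v r)
    (hw : DifferentiableAt ℝ w r) (hW : HasDerivAt (weightedWronskian a v w) D r) (hwr : w r ≠ 0) :
    HasDerivAt (sturmFunctional a v w) (D * Real.arctan (v r / w r)
      + a r * (deriv v r * w r - v r * deriv w r) ^ 2 / (v r ^ 2 + w r ^ 2)) r := by
  refine (hW.mul (hv.hasDerivAt.fun_div hw.hasDerivAt hwr).arctan).congr_deriv ?_
  have : v r ^ 2 + w r ^ 2 ≠ 0 := by positivity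
  have : w r ^ 2 + v r ^ 2 ≠ 0 := by positivity
  rw [weightedWronskian]
  field_simp
  ring

lemma hasDerivAt_sturmFunctional_of_weightedWronskian_eq_zero
    (hW : HasDerivAt (weightedWronskian a v w) 0 r) (hWr : weightedWronskian a v w r = 0) :
    HasDerivAt (sturmFunctional a v w) 0 r := by
  rw [hasDerivAt_iff_isLittleO] at hW ⊢
  refine Asymptotics.IsBigO.trans_isLittleO (.of_bound (π / 2) (.of_forall fun s => ?_)) hW
  simpa [hWr, sturmFunctional, mul_comm] using abs_sturmFunctional_le a v w s

lemma exists_hasDerivAt_sturmFunctional {c : ℝ} (ha : 0 ≤ a r) (hv : DifferentiableAt ℝ v r)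
    (hw : DifferentiableAt ℝ w r) (hw_zero : w r = 0 → deriv w r = 0)
    (hW : HasDerivAt (weightedWronskian a v w) (c * (v r * w r)) r) :
    ∃ D, HasDerivAt (sturmFunctional a v w) D r ∧
      c * (v r * w r * Real.arctan (v r / w r)) ≤ D := by
  rcases eq_or_ne (w r) 0 with hwr | hwr
  · refine ⟨0, hasDerivAt_sturmFunctional_of_weightedWronskian_eq_zero ?_ ?_, by simp [hwr]⟩
    · simpa [hwr] using hW
    · simp [weightedWronskian, hwr, hw_zero hwr]
  · refine ⟨_, hasDerivAt_sturmFunctional_of_ne_zero hv hw hW hwr, ?_⟩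
    have : 0 ≤ a r * (deriv v r * w r - v r * deriv w r) ^ 2 / (v r ^ 2 + w r ^ 2) := by positivity
    linarith

lemma eq_zero_of_monotoneOn_of_small {s : Set ℝ} {f : ℝ → ℝ} (hf : MonotoneOn f s)
    (hleft : ∀ r ∈ s, ∀ ε > 0, ∃ t ∈ s, t ≤ r ∧ |f t| < ε)
    (hright : ∀ r ∈ s, ∀ ε > 0, ∃ t ∈ s, r ≤ t ∧ |f t| < ε) (hr : r ∈ s) : f r = 0 := by
  refine le_antisymm (le_of_forall_pos_le_add fun ε hε => ?_)
    (le_of_forall_pos_le_add fun ε hε => ?_)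
  · obtain ⟨t, ht, hrt, hsmall⟩ := hright r hr ε hε
    linarith [hf hr ht hrt, (abs_lt.1 hsmall).2]
  · obtain ⟨t, ht, htr, hsmall⟩ := hleft r hr ε hε
    linarith [hf ht hr htr, (abs_lt.1 hsmall).1]

variable {s : Set ℝ} {c : ℝ → ℝ}

lemma sturmFunctional_eq_zero (hs : IsOpen s) (hsc : Convex ℝ s)
    (ha : ∀ r ∈ s, 0 ≤ a r) (hc : ∀ r ∈ s, 0 ≤ c r)
    (hv : ∀ r ∈ s, DifferentiableAt ℝ v r) (hw : ∀ r ∈ s, DifferentiableAt ℝ w r)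
    (hw_zero : ∀ r ∈ s, w r = 0 → deriv w r = 0)
    (hW : ∀ r ∈ s, HasDerivAt (weightedWronskian a v w) (c r * (v r * w r)) r)
    (hleft : ∀ r ∈ s, ∀ ε > 0, ∃ t ∈ s, t ≤ r ∧ |weightedWronskian a v w t| < ε)
    (hright : ∀ r ∈ s, ∀ ε > 0, ∃ t ∈ s, r ≤ t ∧ |weightedWronskian a v w t| < ε)
    (hr : r ∈ s) : sturmFunctional a v w r = 0 := by
  have hderiv := fun r hr => exists_hasDerivAt_sturmFunctional (ha r hr) (hv r hr) (hw r hr)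
    (hw_zero r hr) (hW r hr)
  have hmono : MonotoneOn (sturmFunctional a v w) s := by
    refine monotoneOn_of_deriv_nonneg hsc
      (fun r hr => (hderiv r hr).choose_spec.1.continuousAt.continuousWithinAt) ?_ ?_
      <;> rw [hs.interior_eq]
    · exact fun r hr => (hderiv r hr).choose_spec.1.differentiableAt.differentiableWithinAt
    · intro r hr
      obtain ⟨D, hD, hcD⟩ := hderiv r hr
      rw [hD.deriv]
      exact (mul_nonneg (hc r hr) (mul_mul_arctan_div_nonneg _ _)).trans hcD
  have hsmall : ∀ t ε, |weightedWronskian a v w t| < ε / (π / 2) →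
      |sturmFunctional a v w t| < ε := fun t ε ht =>
    (abs_sturmFunctional_le a v w t).trans_lt ((lt_div_iff₀ (by positivity)).1 ht)
  refine eq_zero_of_monotoneOn_of_small hmono (fun r hr ε hε => ?_) (fun r hr ε hε => ?_) hr
  · obtain ⟨t, ht, htr, htW⟩ := hleft r hr (ε / (π / 2)) (by positivity)
    exact ⟨t, ht, htr, hsmall t ε htW⟩
  · obtain ⟨t, ht, hrt, htW⟩ := hright r hr (ε / (π / 2)) (by positivity)
    exact ⟨t, ht, hrt, hsmall t ε htW⟩

theorem eq_zero_of_weightedWronskian_small (hs : IsOpen s) (hsc : Convex ℝ s)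
    (ha : ∀ r ∈ s, 0 ≤ a r) (hc : ∀ r ∈ s, 0 < c r)
    (hv : ∀ r ∈ s, DifferentiableAt ℝ v r) (hw : ∀ r ∈ s, DifferentiableAt ℝ w r)
    (hw_zero : ∀ r ∈ s, w r = 0 → deriv w r = 0)
    (hW : ∀ r ∈ s, HasDerivAt (weightedWronskian a v w) (c r * (v r * w r)) r)
    (hleft : ∀ r ∈ s, ∀ ε > 0, ∃ t ∈ s, t ≤ r ∧ |weightedWronskian a v w t| < ε)
    (hright : ∀ r ∈ s, ∀ ε > 0, ∃ t ∈ s, r ≤ t ∧ |weightedWronskian a v w t| < ε)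
    (hr : r ∈ s) (hwr : w r ≠ 0) : v r = 0 := by
  obtain ⟨D, hD, hcD⟩ := exists_hasDerivAt_sturmFunctional (ha r hr) (hv r hr) (hw r hr)
    (hw_zero r hr) (hW r hr)
  have hzero : sturmFunctional a v w =ᶠ[𝓝 r] fun _ => 0 := by
    filter_upwards [hs.mem_nhds hr] with t ht
    exact sturmFunctional_eq_zero hs hsc ha (fun r hr => (hc r hr).le) hv hw hw_zero hW hleft
      hright ht
  have hD0 : D = 0 := hD.unique ((hasDerivAt_const r 0).congr_of_eventuallyEq hzero)
  by_contra hvr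
  have := mul_pos (hc r hr) (mul_mul_arctan_div_pos hvr hwr)
  linarith

end Sturm

/-! ### Radial elliptic operators -/

section RadialOperator

/-- The action of the elliptic operator `-div (A ∇ ·) + Q` with radial coefficients on the radial
factor `v` of a function `v(r) Y` on `ℝ^N`, where `Y` is a spherical harmonic with eigenvalue
`lam`. -/
def radialOp (N : ℕ) (A Q : ℝ → ℝ) (lam : ℝ) (v : ℝ → ℝ) (r : ℝ) : ℝ :=
  -A r * (lapRad N v r - lam / r ^ 2 * v r) - deriv A r * deriv v r + Q r * v r

/-- The density with respect to `dr` of the squared `H¹` norm of a radial function on `ℝ^N`, up to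
the area of the unit sphere. -/
def radialEnergyDensity (N : ℕ) (v : ℝ → ℝ) (r : ℝ) : ℝ :=
  (v r ^ 2 + deriv v r ^ 2) * r ^ (N - 1)

/-- The weight `r^{N-1} A` which puts `radialOp N A Q lam` into Sturm–Liouville form. -/
def radialWeight (N : ℕ) (A : ℝ → ℝ) (r : ℝ) : ℝ :=
  r ^ (N - 1) * A r

variable {N : ℕ} {A Q v w : ℝ → ℝ} {lam mu r : ℝ}

lemma radialEnergyDensity_nonneg (N : ℕ) (v : ℝ → ℝ) (hr : 0 ≤ r) :
    0 ≤ radialEnergyDensity N v r := by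
  unfold radialEnergyDensity
  positivity

lemma hasDerivAt_radialWeight (hN : 1 ≤ N) (hr : r ≠ 0) (hA : DifferentiableAt ℝ A r) :
    HasDerivAt (radialWeight N A) (r ^ (N - 1) * (((N : ℝ) - 1) / r * A r + deriv A r)) r := by
  obtain ⟨n, rfl⟩ := Nat.exists_eq_add_of_le' hN
  refine ((hasDerivAt_pow n r).mul hA.hasDerivAt).congr_deriv ?_
  rcases n with _ | n
  · simp
  · simp only [Nat.add_sub_cancel, pow_succ]
    push_cast
    field_simp
    ring

lemma hasDerivAt_weightedWronskian_radialWeight (hN : 1 ≤ N) (hr : r ≠ 0)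
    (hA : DifferentiableAt ℝ A r) (hv : ContDiffAt ℝ 2 v r) (hw : ContDiffAt ℝ 2 w r)
    (hv_eq : radialOp N A Q lam v r = 0) (hw_eq : radialOp N A Q mu w r = 0) :
    HasDerivAt (weightedWronskian (radialWeight N A) v w)
      ((lam - mu) / r ^ 2 * radialWeight N A r * (v r * w r)) r := by
  have hasDerivAt_deriv : ∀ {f : ℝ → ℝ}, ContDiffAt ℝ 2 f r →
      HasDerivAt f (deriv f r) r ∧ HasDerivAt (deriv f) (deriv (deriv f) r) r := fun hf =>
    ⟨(hf.differentiableAt two_ne_zero).hasDerivAt,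
      ((hf.derivWithin (m := 1) (by norm_num)).differentiableAt one_ne_zero).hasDerivAt⟩
  obtain ⟨hv₁, hv₂⟩ := hasDerivAt_deriv hv
  obtain ⟨hw₁, hw₂⟩ := hasDerivAt_deriv hw
  refine ((hasDerivAt_radialWeight hN hr hA).mul
    ((hv₂.mul hw₁).sub (hv₁.mul hw₂))).congr_deriv ?_
  simp only [radialOp, lapRad, radialWeight, Pi.mul_apply, Pi.sub_apply] at hv_eq hw_eq ⊢
  linear_combination r ^ (N - 1) * (v r * hw_eq - w r * hv_eq)

lemma weightedWronskian_radialWeight_isBigO_atTop (hA : A =O[atTop] fun _ => (1 : ℝ)) :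
    weightedWronskian (radialWeight N A) v w =O[atTop]
      fun r => radialEnergyDensity N v r + radialEnergyDensity N w r := by
  have hbound : (fun r => r ^ (N - 1) * (deriv v r * w r - v r * deriv w r)) =O[atTop]
      fun r => radialEnergyDensity N v r + radialEnergyDensity N w r := by
    refine .of_bound' ?_
    filter_upwards [eventually_ge_atTop 0] with r hr
    rw [norm_mul, Real.norm_of_nonneg (pow_nonneg hr _), Real.norm_of_nonneg
      (add_nonneg (radialEnergyDensity_nonneg N v hr) (radialEnergyDensity_nonneg N w hr)),
      radialEnergyDensity, radialEnergyDensity, ← add_mul, mul_comm (r ^ (N - 1))]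
    gcongr
    rw [Real.norm_eq_abs, abs_le]
    constructor <;> nlinarith [sq_nonneg (deriv v r + w r), sq_nonneg (deriv v r - w r),
      sq_nonneg (v r - deriv w r), sq_nonneg (v r + deriv w r)]
  refine (hA.mul hbound).congr (fun r => ?_) fun r => one_mul _
  rw [weightedWronskian, radialWeight]
  ring

lemma pow_mul_deriv_isBigO_radialEnergyDensity (N : ℕ) (v : ℝ → ℝ) :
    (fun r => r ^ (N - 1) * deriv v r) =O[𝓝[>] 0] fun r => radialEnergyDensity N v r + 1 := by
  refine .of_bound' ?_
  filter_upwards [Ioo_mem_nhdsGT one_pos] with r ⟨hr0, hr1⟩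
  have hpow : r ^ (N - 1) ≤ 1 := pow_le_one₀ hr0.le hr1.le
  have habs : |deriv v r| ≤ v r ^ 2 + deriv v r ^ 2 + 1 := by
    nlinarith [sq_nonneg (v r), sq_abs (deriv v r), sq_nonneg (|deriv v r| - 1)]
  calc ‖r ^ (N - 1) * deriv v r‖ = r ^ (N - 1) * |deriv v r| := by
        rw [norm_mul, Real.norm_of_nonneg (pow_nonneg hr0.le _), Real.norm_eq_abs]
    _ ≤ r ^ (N - 1) * (v r ^ 2 + deriv v r ^ 2 + 1) := by gcongr
    _ ≤ radialEnergyDensity N v r + 1 := by rw [radialEnergyDensity]; linarith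
    _ ≤ ‖radialEnergyDensity N v r + 1‖ := Real.le_norm_self _

lemma one_isBigO_radialEnergyDensity_add_one (N : ℕ) (v : ℝ → ℝ) :
    (fun _ => (1 : ℝ)) =O[𝓝[>] 0] fun r => radialEnergyDensity N v r + 1 := by
  refine .of_bound' ?_
  filter_upwards [self_mem_nhdsWithin] with r (hr : 0 < r)
  rw [norm_one]
  exact le_trans (by linarith [radialEnergyDensity_nonneg N v hr.le]) (Real.le_norm_self _)

lemma weightedWronskian_radialWeight_isBigO_nhdsGT_zero (hN : 2 ≤ N)
    (hA : A =O[𝓝[>] 0] fun _ => (1 : ℝ)) (hv : v =O[𝓝[>] 0] fun _ => (1 : ℝ))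
    (hw : w =O[𝓝[>] 0] id) (hw' : deriv w =O[𝓝[>] 0] fun _ => (1 : ℝ)) :
    (fun r => weightedWronskian (radialWeight N A) v w r * r⁻¹) =O[𝓝[>] 0]
      fun r => radialEnergyDensity N v r + 1 := by
  have hpos : ∀ᶠ r : ℝ in 𝓝[>] 0, 0 < r := self_mem_nhdsWithin
  have hw_div : (fun r => w r * r⁻¹) =O[𝓝[>] 0] fun _ => (1 : ℝ) := by
    refine (hw.mul (Asymptotics.isBigO_refl (fun r : ℝ => r⁻¹) _)).congr' .rfl ?_
    filter_upwards [hpos] with r hr using mul_inv_cancel₀ hr.ne'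
  have hpow : (fun r : ℝ => r ^ (N - 2)) =O[𝓝[>] 0] fun _ => (1 : ℝ) :=
    ((continuous_pow (N - 2)).tendsto 0).isBigO_one ℝ |>.mono nhdsWithin_le_nhds
  have hfirst : (fun r => r ^ (N - 1) * deriv v r * (w r * r⁻¹)) =O[𝓝[>] 0]
      fun r => radialEnergyDensity N v r + 1 := by
    simpa using (pow_mul_deriv_isBigO_radialEnergyDensity N v).mul hw_div
  have hsecond : (fun r => r ^ (N - 2) * (v r * deriv w r)) =O[𝓝[>] 0]
      fun r => radialEnergyDensity N v r + 1 := by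
    have hbounded := hpow.mul (hv.mul hw')
    simp only [mul_one] at hbounded
    exact hbounded.trans (one_isBigO_radialEnergyDensity_add_one N v)
  refine (hA.mul (hfirst.sub hsecond)).congr' ?_ (.of_forall fun r => one_mul _)
  filter_upwards [hpos] with r hr
  have hpow_succ : r ^ (N - 1) = r ^ (N - 2) * r := by rw [← pow_succ]; congr 1; omega
  rw [weightedWronskian, radialWeight, hpow_succ]
  field_simp

lemma exists_abs_weightedWronskian_lt_of_lt (hN : 2 ≤ N)
    (hA : A =O[𝓝[>] 0] fun _ => (1 : ℝ)) (hv : v =O[𝓝[>] 0] fun _ => (1 : ℝ))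
    (hv_energy : IntegrableOn (radialEnergyDensity N v) (Set.Ioi 0))
    (hw : w =O[𝓝[>] 0] id) (hw' : deriv w =O[𝓝[>] 0] fun _ => (1 : ℝ))
    (hr : 0 < r) {ε : ℝ} (hε : 0 < ε) :
    ∃ t ∈ Set.Ioo 0 r, |weightedWronskian (radialWeight N A) v w t| < ε := by
  have hint : IntegrableOn (fun t => radialEnergyDensity N v t + 1) (Set.Ioo 0 1) :=
    (hv_energy.mono_set Set.Ioo_subset_Ioi_self).add (integrableOn_const (by simp))
  obtain ⟨t, hsmall, ht⟩ := ((frequently_abs_lt_nhdsGT_zero_of_isBigO one_pos hint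
    (weightedWronskian_radialWeight_isBigO_nhdsGT_zero hN hA hv hw hw') hε).and_eventually
    (Ioo_mem_nhdsGT hr)).exists
  exact ⟨t, ht, hsmall⟩

lemma exists_abs_weightedWronskian_lt_of_gt (hA : A =O[atTop] fun _ => (1 : ℝ))
    (hv_energy : IntegrableOn (radialEnergyDensity N v) (Set.Ioi 0))
    (hw_energy : IntegrableOn (radialEnergyDensity N w) (Set.Ioi 0))
    (r : ℝ) {ε : ℝ} (hε : 0 < ε) :
    ∃ t > r, |weightedWronskian (radialWeight N A) v w t| < ε := by
  obtain ⟨t, hsmall, ht⟩ := ((frequently_abs_lt_atTop_of_isBigO (hv_energy.add hw_energy)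
    (weightedWronskian_radialWeight_isBigO_atTop hA) hε).and_eventually
    (eventually_gt_atTop r)).exists
  exact ⟨t, ht, hsmall⟩

theorem eq_zero_of_radialOp_eq_zero_of_nonpos_solution (hN : 2 ≤ N) (hlam : mu < lam)
    (hA : DifferentiableOn ℝ A (Set.Ioi 0)) (hA_pos : ∀ r, 0 < r → 0 < A r)
    (hA_zero : A =O[𝓝[>] 0] fun _ => (1 : ℝ)) (hA_top : A =O[atTop] fun _ => (1 : ℝ))
    (hv : ContDiffOn ℝ 2 v (Set.Ioi 0)) (hv_zero : v =O[𝓝[>] 0] fun _ => (1 : ℝ))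
    (hv_energy : IntegrableOn (radialEnergyDensity N v) (Set.Ioi 0))
    (hv_eq : ∀ r, 0 < r → radialOp N A Q lam v r = 0)
    (hw : ContDiffOn ℝ 2 w (Set.Ioi 0)) (hw_nonpos : ∀ r, 0 < r → w r ≤ 0)
    (hw_zero : w =O[𝓝[>] 0] id) (hw'_zero : deriv w =O[𝓝[>] 0] fun _ => (1 : ℝ))
    (hw_energy : IntegrableOn (radialEnergyDensity N w) (Set.Ioi 0))
    (hw_eq : ∀ r, 0 < r → radialOp N A Q mu w r = 0) (hr : 0 < r) (hwr : w r ≠ 0) : v r = 0 := by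
  have contDiffAt_of_mem {f : ℝ → ℝ} (hf : ContDiffOn ℝ 2 f (Set.Ioi 0)) (t : ℝ)
      (ht : t ∈ Set.Ioi 0) : ContDiffAt ℝ 2 f t := hf.contDiffAt (Ioi_mem_nhds ht)
  have hweight : ∀ t, 0 < t → 0 < radialWeight N A t := fun t ht =>
    mul_pos (pow_pos ht _) (hA_pos t ht)
  have hwronskian : ∀ t ∈ Set.Ioi 0, HasDerivAt (weightedWronskian (radialWeight N A) v w)
      ((lam - mu) / t ^ 2 * radialWeight N A t * (v t * w t)) t := fun t ht =>
    hasDerivAt_weightedWronskian_radialWeight (by omega) (ne_of_gt ht)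
      (hA.differentiableAt (Ioi_mem_nhds ht)) (contDiffAt_of_mem hv t ht)
      (contDiffAt_of_mem hw t ht) (hv_eq t ht) (hw_eq t ht)
  have hw_deriv : ∀ t ∈ Set.Ioi 0, w t = 0 → deriv w t = 0 := fun t ht hwt => by
    have hmax : IsLocalMax w t := by
      filter_upwards [Ioi_mem_nhds ht] with y hy
      exact hwt ▸ hw_nonpos y hy
    exact hmax.deriv_eq_zero
  refine eq_zero_of_weightedWronskian_small isOpen_Ioi (convex_Ioi 0)
    (fun t ht => (hweight t ht).le) (fun t ht => ?_)
    (fun t ht => (contDiffAt_of_mem hv t ht).differentiableAt two_ne_zero)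
    (fun t ht => (contDiffAt_of_mem hw t ht).differentiableAt two_ne_zero) hw_deriv hwronskian
    (fun t ht ε hε => ?_) (fun t ht ε hε => ?_) hr hwr
  · exact mul_pos (div_pos (sub_pos.2 hlam) (pow_pos ht 2)) (hweight t ht)
  · obtain ⟨y, ⟨hy0, hyt⟩, hy⟩ := exists_abs_weightedWronskian_lt_of_lt hN hA_zero hv_zero
      hv_energy hw_zero hw'_zero ht hε
    exact ⟨y, hy0, hyt.le, hy⟩
  · obtain ⟨y, hty, hy⟩ := exists_abs_weightedWronskian_lt_of_gt hA_top hv_energy hw_energy t hε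
    exact ⟨y, lt_trans ht hty, hty.le, hy⟩

end RadialOperator

/-! ### Laplacians of radial functions -/

section RadialLaplacian

lemma hasFDerivAt_norm_of_ne_zero {E : Type*} [NormedAddCommGroup E] [InnerProductSpace ℝ E]
    {x : E} (hx : x ≠ 0) :
    HasFDerivAt (fun y : E => ‖y‖) (‖x‖⁻¹ • innerSL ℝ x) x := by
  have hsqrt := (hasStrictFDerivAt_norm_sq x).hasFDerivAt.sqrt
    (pow_ne_zero 2 (norm_ne_zero_iff.2 hx))
  simp only [Real.sqrt_sq (norm_nonneg _)] at hsqrt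
  refine hsqrt.congr_fderiv ?_
  ext y
  simp only [one_div, mul_inv_rev, smul_apply, coe_innerSL_apply, nsmul_eq_mul, Nat.cast_ofNat,
    smul_eq_mul]
  field_simp

variable {N : ℕ} {h : ℝ → ℝ} {x : EuclideanSpace ℝ (Fin N)}

lemma pd_comp_norm (i : Fin N) (hx : x ≠ 0) (hh : DifferentiableAt ℝ h ‖x‖) :
    pd i (fun y => h ‖y‖) x = deriv h ‖x‖ / ‖x‖ * x i := by
  have hcomp : HasFDerivAt (fun y => h ‖y‖) (deriv h ‖x‖ • ‖x‖⁻¹ • innerSL ℝ x) x :=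
    hh.hasDerivAt.comp_hasFDerivAt x (hasFDerivAt_norm_of_ne_zero hx)
  rw [pd, hcomp.fderiv]
  simp only [smul_apply, coe_innerSL_apply, EuclideanSpace.inner_single_right, ringHom_apply,
    one_mul, smul_eq_mul]
  ring

lemma pd_pd_comp_norm (i : Fin N) (hx : x ≠ 0) (hh : ContDiffAt ℝ 2 h ‖x‖) :
    pd i (pd i fun y => h ‖y‖) x =
      (deriv (deriv h) ‖x‖ / ‖x‖ ^ 2 - deriv h ‖x‖ / ‖x‖ ^ 3) * x i ^ 2 + deriv h ‖x‖ / ‖x‖ := by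
  have hnorm : ‖x‖ ≠ 0 := norm_ne_zero_iff.2 hx
  have hh' : DifferentiableAt ℝ (deriv h) ‖x‖ :=
    (hh.derivWithin (m := 1) (by norm_num)).differentiableAt one_ne_zero
  have hnear : (pd i fun y => h ‖y‖) =ᶠ[𝓝 x] fun y => deriv h ‖y‖ / ‖y‖ * y i := by
    have hdiff : ∀ᶠ r in 𝓝 ‖x‖, DifferentiableAt ℝ h r :=
      (hh.eventually (by simp)).mono fun r hr => hr.differentiableAt two_ne_zero
    filter_upwards [isOpen_ne.mem_nhds hx, continuous_norm.continuousAt.eventually hdiff]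
      with y hy hdy using pd_comp_norm i hy hdy
  have hquot := (hh'.hasDerivAt.fun_div (hasDerivAt_id ‖x‖) hnorm).comp_hasFDerivAt x
    (hasFDerivAt_norm_of_ne_zero hx)
  have hprod := hquot.fun_mul (EuclideanSpace.proj (𝕜 := ℝ) i).hasFDerivAt
  have happly := congrArg (fun L => L (EuclideanSpace.single i 1))
    (hprod.congr_of_eventuallyEq hnear).fderiv
  rw [pd]
  refine happly.trans ?_
  simp only [id_eq, Function.comp_apply, PiLp.proj_apply, mul_one, add_apply, smul_apply,
    PiLp.single_eq_same, smul_eq_mul, coe_innerSL_apply, EuclideanSpace.inner_single_right,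
    ringHom_apply, one_mul]
  field_simp
  ring

lemma lap_comp_norm (hx : x ≠ 0) (hh : ContDiffAt ℝ 2 h ‖x‖) :
    lap (fun y => h ‖y‖) x = lapRad N h ‖x‖ := by
  have hnorm : ‖x‖ ≠ 0 := norm_ne_zero_iff.2 hx
  simp only [lap, pd_pd_comp_norm _ hx hh, Finset.sum_add_distrib, ← Finset.mul_sum,
    ← EuclideanSpace.real_norm_sq_eq, Finset.sum_const, Finset.card_univ, Fintype.card_fin,
    nsmul_eq_mul, lapRad]
  field_simp
  ring

end RadialLaplacian

/-! ### The radial quasilinear equation -/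

section RadialQLS

variable {N : ℕ} {ω p r : ℝ} {U : ℝ → ℝ}

/-- The coefficient `1 + 2U²` of the second-order part of `L₊`. -/
def diffusionCoeff (U : ℝ → ℝ) (r : ℝ) : ℝ :=
  1 + 2 * U r ^ 2

/-- The zeroth-order coefficient of `L₊`. -/
def potentialCoeff (N : ℕ) (ω p : ℝ) (U : ℝ → ℝ) (r : ℝ) : ℝ :=
  ω - (2 * U r * lapRad N U r + lapRad N (fun s => U s ^ 2) r + p * U r ^ (p - 1))

lemma hasDerivAt_diffusionCoeff (hU : DifferentiableAt ℝ U r) :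
    HasDerivAt (diffusionCoeff U) (4 * U r * deriv U r) r := by
  refine (((hU.hasDerivAt.pow 2).const_mul 2).const_add 1).congr_deriv ?_
  simp only [Nat.cast_ofNat, Nat.add_one_sub_one, pow_one]
  ring

lemma LplusRad_eq_radialOp (N k : ℕ) (ω p : ℝ) (v : ℝ → ℝ) (hU : DifferentiableAt ℝ U r) :
    LplusRad N ω p U k v r =
      radialOp N (diffusionCoeff U) (potentialCoeff N ω p U) (k * (N + k - 2)) v r := by
  rw [radialOp, (hasDerivAt_diffusionCoeff hU).deriv]
  simp only [LplusRad, diffusionCoeff, potentialCoeff, lapRad]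
  ring

lemma lapRad_sq (N : ℕ) (hU : ContDiffAt ℝ 2 U r) :
    lapRad N (fun s => U s ^ 2) r = 2 * U r * lapRad N U r + 2 * deriv U r ^ 2 := by
  have hU' : DifferentiableAt ℝ (deriv U) r :=
    (hU.derivWithin (m := 1) (by norm_num)).differentiableAt one_ne_zero
  have hderiv : deriv (fun s => U s ^ 2) =ᶠ[𝓝 r] fun s => 2 * U s * deriv U s := by
    filter_upwards [hU.eventually (by simp)] with s hs
    simpa using ((hs.differentiableAt two_ne_zero).hasDerivAt.fun_pow 2).deriv
  have hderiv₂ : deriv (deriv fun s => U s ^ 2) r =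
      2 * deriv U r * deriv U r + 2 * U r * deriv (deriv U) r :=
    ((((hU.differentiableAt two_ne_zero).hasDerivAt.const_mul 2).fun_mul
      hU'.hasDerivAt).congr_of_eventuallyEq hderiv).deriv
  rw [lapRad, hderiv₂, hderiv.eq_of_nhds, lapRad]
  ring

lemma hasDerivAt_lapRad (N : ℕ) (hr : r ≠ 0) (hU : ContDiffAt ℝ 3 U r) :
    HasDerivAt (lapRad N U) (lapRad N (deriv U) r - ((N : ℝ) - 1) / r ^ 2 * deriv U r) r := by
  have hU' : ContDiffAt ℝ 2 (deriv U) r := hU.derivWithin (by norm_num)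
  have hU'' : ContDiffAt ℝ 1 (deriv (deriv U)) r := hU'.derivWithin (by norm_num)
  refine ((hU''.differentiableAt one_ne_zero).hasDerivAt.add
    (((hasDerivAt_const r ((N : ℝ) - 1)).div (hasDerivAt_id r) hr).mul
      (hU'.differentiableAt two_ne_zero).hasDerivAt)).congr_deriv ?_
  simp only [id_eq, zero_mul, mul_one, zero_sub, Pi.div_apply, lapRad]
  field_simp
  ring

-- By translation invariance of (QLS) the functions `∂ᵢu = U'(r) xᵢ / r` lie in the kernel of `L₊`;
-- the factors `xᵢ / r` are spherical harmonics of degree one, whence the eigenvalue `N - 1`.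
lemma radialOp_deriv_eq_zero (hr : r ≠ 0) (hU : ContDiffAt ℝ 3 U r) (hUr : U r ≠ 0)
    (hode : ∀ᶠ s in 𝓝 r,
      -lapRad N U s - U s * lapRad N (fun t => U t ^ 2) s + ω * U s - U s ^ p = 0) :
    radialOp N (diffusionCoeff U) (potentialCoeff N ω p U) (N - 1) (deriv U) r = 0 := by
  have hU₂ : ContDiffAt ℝ 2 U r := hU.of_le (by norm_num)
  have hd₁ := (hU.differentiableAt three_ne_zero).hasDerivAt
  have hd₂ : HasDerivAt (deriv U) (deriv (deriv U) r) r :=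
    ((hU.derivWithin (m := 2) (by norm_num)).differentiableAt two_ne_zero).hasDerivAt
  have hexpand : (fun s => -(diffusionCoeff U s * lapRad N U s) - 2 * U s * deriv U s ^ 2 + ω * U s
      - U s ^ p) =ᶠ[𝓝 r] fun _ => 0 := by
    filter_upwards [hode, hU₂.eventually (by simp)] with s hs hUs
    rw [lapRad_sq N hUs] at hs
    rw [← hs, diffusionCoeff]
    ring
  have hderiv := (((((hasDerivAt_diffusionCoeff (hU.differentiableAt three_ne_zero)).mul
    (hasDerivAt_lapRad N hr hU)).neg.sub ((hd₁.const_mul 2).mul (hd₂.pow 2))).add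
    (hd₁.const_mul ω)).sub (hd₁.rpow_const (p := p) (.inl hUr))).unique
    ((hasDerivAt_const r 0).congr_of_eventuallyEq hexpand)
  rw [← hderiv, radialOp, (hasDerivAt_diffusionCoeff (hU.differentiableAt three_ne_zero)).deriv,
    potentialCoeff, lapRad_sq N hU₂]
  simp only [Pi.pow_apply, Nat.cast_ofNat, Nat.add_one_sub_one, pow_one]
  ring

end RadialQLS

/-! ### Profiles of radial functions -/

section RadialProfile

variable {E : Type*} [NormedAddCommGroup E] [NormedSpace ℝ E] {u : E → ℝ} {U : ℝ → ℝ} {e : E}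
  {r : ℝ}

lemma radialProfile_eq_apply_smul (he : ‖e‖ = 1) (hU : ∀ x, u x = U ‖x‖) (hr : 0 ≤ r) :
    U r = u (r • e) := by
  rw [hU, norm_smul, he, mul_one, Real.norm_of_nonneg hr]

lemma radialProfile_eventuallyEq (he : ‖e‖ = 1) (hU : ∀ x, u x = U ‖x‖) (hr : 0 < r) :
    U =ᶠ[𝓝 r] fun s => u (s • e) := by
  filter_upwards [Ioi_mem_nhds hr] with s hs
  exact radialProfile_eq_apply_smul he hU (le_of_lt hs)

lemma contDiffOn_radialProfile {n : WithTop ℕ∞} (he : ‖e‖ = 1) (hU : ∀ x, u x = U ‖x‖)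
    (hu : ContDiff ℝ n u) : ContDiffOn ℝ n U (Set.Ioi 0) :=
  (hu.comp (contDiff_id.smul contDiff_const)).contDiffOn.congr fun _ hr =>
    radialProfile_eq_apply_smul he hU (le_of_lt hr)

lemma deriv_radialProfile (he : ‖e‖ = 1) (hU : ∀ x, u x = U ‖x‖)
    (hu : DifferentiableAt ℝ u (r • e)) (hr : 0 < r) : deriv U r = fderiv ℝ u (r • e) e := by
  have hline : HasDerivAt (fun s : ℝ => s • e) e r := by simpa using (hasDerivAt_id r).smul_const e
  exact ((hu.hasFDerivAt.comp_hasDerivAt r hline).congr_of_eventuallyEq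
    (radialProfile_eventuallyEq he hU hr)).deriv

lemma deriv_deriv_radialProfile (he : ‖e‖ = 1) (hU : ∀ x, u x = U ‖x‖) (hu : ContDiff ℝ 2 u)
    (hr : 0 < r) : deriv (deriv U) r = fderiv ℝ (fderiv ℝ u) (r • e) e e := by
  have hline : HasDerivAt (fun s : ℝ => s • e) e r := by simpa using (hasDerivAt_id r).smul_const e
  have hu' : Differentiable ℝ (fderiv ℝ u) :=
    (hu.fderiv_right (m := 1) (by norm_num)).differentiable one_ne_zero
  have hnear : deriv U =ᶠ[𝓝 r] fun s => fderiv ℝ u (s • e) e := by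
    filter_upwards [Ioi_mem_nhds hr] with s hs
    exact deriv_radialProfile he hU (hu.differentiable two_ne_zero _) hs
  have hsecond : HasDerivAt (fun s : ℝ => fderiv ℝ u (s • e))
      (fderiv ℝ (fderiv ℝ u) (r • e) e) r := (hu' (r • e)).hasFDerivAt.comp_hasDerivAt r hline
  rw [hnear.deriv_eq]
  simpa using (hsecond.clm_apply (hasDerivAt_const r e)).deriv

lemma abs_deriv_radialProfile_le (he : ‖e‖ = 1) (hU : ∀ x, u x = U ‖x‖)
    (hu : DifferentiableAt ℝ u (r • e)) (hr : 0 < r) :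
    |deriv U r| ≤ ‖iteratedFDeriv ℝ 1 u (r • e)‖ := by
  rw [deriv_radialProfile he hU hu hr, norm_iteratedFDeriv_one, ← Real.norm_eq_abs]
  simpa [he] using (fderiv ℝ u (r • e)).le_opNorm e

lemma abs_deriv_deriv_radialProfile_le (he : ‖e‖ = 1) (hU : ∀ x, u x = U ‖x‖)
    (hu : ContDiff ℝ 2 u) (hr : 0 < r) :
    |deriv (deriv U) r| ≤ ‖iteratedFDeriv ℝ 2 u (r • e)‖ := by
  rw [deriv_deriv_radialProfile he hU hu hr, ← norm_iteratedFDeriv_fderiv (n := 1),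
    norm_iteratedFDeriv_one, ← Real.norm_eq_abs]
  simpa [he] using (fderiv ℝ (fderiv ℝ u) (r • e)).le_opNorm₂ e e

lemma deriv_radialProfile_isBigO_id (he : ‖e‖ = 1) (hU : ∀ x, u x = U ‖x‖)
    (hu : ContDiff ℝ 2 u) (hmax : IsLocalMax u 0) : deriv U =O[𝓝[>] 0] id := by
  have hu' : Differentiable ℝ (fderiv ℝ u) :=
    (hu.fderiv_right (m := 1) (by norm_num)).differentiable one_ne_zero
  have hdiff : Differentiable ℝ fun s : ℝ => fderiv ℝ u (s • e) e :=
    (hu'.comp (differentiable_id.smul_const e)).clm_apply (differentiable_const e)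
  have hzero : (fun s : ℝ => fderiv ℝ u (s • e) e) =O[𝓝[>] 0] id := by
    simpa [hmax.fderiv_eq_zero, Function.id_def] using
      (hdiff 0).isBigO_sub.mono (nhdsWithin_le_nhds (s := Set.Ioi 0))
  refine hzero.congr' ?_ .rfl
  filter_upwards [self_mem_nhdsWithin] with s hs
  exact (deriv_radialProfile he hU (hu.differentiable two_ne_zero _) hs).symm

end RadialProfile

lemma Ici_subset_closure_deriv_ne_zero {f : ℝ → ℝ} {a : ℝ} (hf : Set.InjOn f (Set.Ioi a))
    (hf' : DifferentiableOn ℝ f (Set.Ioi a)) :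
    Set.Ici a ⊆ closure {x | a < x ∧ deriv f x ≠ 0} := by
  rw [← closure_Ioi]
  refine closure_minimal (fun x (hx : a < x) => Metric.mem_closure_iff.2 fun ε hε => ?_)
    isClosed_closure
  have hlt : x < x + ε := lt_add_of_pos_right x hε
  have hsub : Set.Icc x (x + ε) ⊆ Set.Ioi a := fun y hy => hx.trans_le hy.1
  obtain ⟨y, ⟨hxy, hyε⟩, hslope⟩ := exists_deriv_eq_slope f hlt (hf'.continuousOn.mono hsub)
    (hf'.mono (Set.Ioo_subset_Icc_self.trans hsub))
  refine ⟨y, ⟨hx.trans hxy, fun hy => ?_⟩, ?_⟩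
  · have hdiff : f (x + ε) - f x = 0 :=
      (div_eq_zero_iff.1 (hslope.symm.trans hy)).resolve_right (sub_pos.2 hlt).ne'
    exact hlt.ne' (hf (hx.trans hlt) hx (sub_eq_zero.1 hdiff))
  · rw [Real.dist_eq, abs_sub_lt_iff]
    constructor <;> linarith

/-! ### Ground-state profiles -/

namespace IsGroundState

variable {N : ℕ} {ω p r : ℝ} {u : EuclideanSpace ℝ (Fin N) → ℝ} {U : ℝ → ℝ}
  {e : EuclideanSpace ℝ (Fin N)}

lemma profile_pos (hu : IsGroundState N ω p u) (he : ‖e‖ = 1) (hU : ∀ x, u x = U ‖x‖)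
    (hr : 0 ≤ r) : 0 < U r := by
  rw [radialProfile_eq_apply_smul he hU hr]
  exact hu.pos _

lemma strictAntiOn_profile (hu : IsGroundState N ω p u) (he : ‖e‖ = 1)
    (hU : ∀ x, u x = U ‖x‖) : StrictAntiOn U (Set.Ici 0) := by
  obtain ⟨V, hV_anti, -, hV⟩ := hu.radial
  refine hV_anti.congr fun r hr => ?_
  rw [radialProfile_eq_apply_smul he hV hr, radialProfile_eq_apply_smul he hU hr]

lemma contDiff (hu : IsGroundState N ω p u) (n : ℕ) : ContDiff ℝ n u :=
  hu.smooth.of_le (mod_cast le_top)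

lemma contDiffOn_profile (hu : IsGroundState N ω p u) (he : ‖e‖ = 1) (hU : ∀ x, u x = U ‖x‖)
    (n : ℕ) : ContDiffOn ℝ n U (Set.Ioi 0) :=
  contDiffOn_radialProfile he hU (hu.contDiff n)

lemma differentiableAt_profile (hu : IsGroundState N ω p u) (he : ‖e‖ = 1)
    (hU : ∀ x, u x = U ‖x‖) (hr : 0 < r) : DifferentiableAt ℝ U r :=
  ((hu.contDiffOn_profile he hU 1).contDiffAt (Ioi_mem_nhds hr)).differentiableAt one_ne_zero

lemma deriv_profile_nonpos (hu : IsGroundState N ω p u) (he : ‖e‖ = 1)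
    (hU : ∀ x, u x = U ‖x‖) (hr : 0 < r) : deriv U r ≤ 0 := by
  rw [← derivWithin_of_mem_nhds (Ici_mem_nhds hr)]
  exact (hu.strictAntiOn_profile he hU).antitoneOn.derivWithin_nonpos

lemma isLocalMax_zero (hu : IsGroundState N ω p u) : IsLocalMax u 0 := by
  obtain ⟨U, hU_anti, -, hU⟩ := hu.radial
  refine .of_forall fun x => ?_
  rw [hU, hU, norm_zero]
  exact hU_anti.antitoneOn Set.self_mem_Ici (norm_nonneg x) (norm_nonneg x)

lemma exists_abs_deriv_profile_le_exp (hu : IsGroundState N ω p u) (he : ‖e‖ = 1)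
    (hU : ∀ x, u x = U ‖x‖) :
    ∃ C, ∃ δ > 0, ∀ r, 0 < r → |deriv U r| ≤ C * Real.exp (-δ * r) := by
  obtain ⟨C, -, δ, hδ, hdecay⟩ := hu.decay 1
  refine ⟨C, δ, hδ, fun r hr => (abs_deriv_radialProfile_le he hU
    (hu.smooth.differentiable (by simp) _) hr).trans ?_⟩
  simpa [norm_smul, he, abs_of_pos hr] using hdecay (r • e)

lemma exists_abs_deriv_deriv_profile_le_exp (hu : IsGroundState N ω p u) (he : ‖e‖ = 1)
    (hU : ∀ x, u x = U ‖x‖) :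
    ∃ C, ∃ δ > 0, ∀ r, 0 < r → |deriv (deriv U) r| ≤ C * Real.exp (-δ * r) := by
  obtain ⟨C, -, δ, hδ, hdecay⟩ := hu.decay 2
  refine ⟨C, δ, hδ, fun r hr => (abs_deriv_deriv_radialProfile_le he hU
    (hu.contDiff 2) hr).trans ?_⟩
  simpa [norm_smul, he, abs_of_pos hr] using hdecay (r • e)

lemma contDiffOn_deriv_profile (hu : IsGroundState N ω p u) (he : ‖e‖ = 1)
    (hU : ∀ x, u x = U ‖x‖) : ContDiffOn ℝ 2 (deriv U) (Set.Ioi 0) :=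
  (hu.contDiffOn_profile he hU 3).deriv_of_isOpen isOpen_Ioi (by norm_num)

lemma integrableOn_radialEnergyDensity_deriv_profile (hu : IsGroundState N ω p u)
    (he : ‖e‖ = 1) (hU : ∀ x, u x = U ‖x‖) :
    IntegrableOn (radialEnergyDensity N (deriv U)) (Set.Ioi 0) := by
  obtain ⟨C₁, δ₁, hδ₁, hbound₁⟩ := hu.exists_abs_deriv_profile_le_exp he hU
  obtain ⟨C₂, δ₂, hδ₂, hbound₂⟩ := hu.exists_abs_deriv_deriv_profile_le_exp he hU
  have hU' := hu.contDiffOn_deriv_profile he hU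
  have hU'' : ContinuousOn (deriv (deriv U)) (Set.Ioi 0) :=
    hU'.continuousOn_deriv_of_isOpen isOpen_Ioi (by norm_num)
  have hsum := (integrableOn_sq_mul_pow_of_abs_le_exp hδ₁ hU'.continuousOn hbound₁ (N - 1)).add
    (integrableOn_sq_mul_pow_of_abs_le_exp hδ₂ hU'' hbound₂ (N - 1))
  exact hsum.congr_fun (fun r _ => (add_mul _ _ _).symm) measurableSet_Ioi

lemma deriv_deriv_profile_isBigO_one (hu : IsGroundState N ω p u) (he : ‖e‖ = 1)
    (hU : ∀ x, u x = U ‖x‖) : deriv (deriv U) =O[𝓝[>] 0] fun _ => (1 : ℝ) := by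
  obtain ⟨C, δ, -, hbound⟩ := hu.exists_abs_deriv_deriv_profile_le_exp he hU
  have hexp : Tendsto (fun r => C * Real.exp (-δ * r)) (𝓝 0) (𝓝 (C * Real.exp (-δ * 0))) :=
    Continuous.tendsto (by fun_prop) 0
  refine Asymptotics.IsBigO.trans (.of_bound' ?_)
    ((hexp.isBigO_one ℝ).mono (nhdsWithin_le_nhds (s := Set.Ioi 0)))
  filter_upwards [self_mem_nhdsWithin] with r hr
  exact (hbound r hr).trans (Real.le_norm_self _)

lemma diffusionCoeff_isBigO_one (hu : IsGroundState N ω p u) (he : ‖e‖ = 1)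
    (hU : ∀ x, u x = U ‖x‖) {l : Filter ℝ} (hl : Set.Ioi 0 ∈ l) :
    diffusionCoeff U =O[l] fun _ => (1 : ℝ) := by
  refine .of_bound (diffusionCoeff U 0) ?_
  filter_upwards [hl] with r (hr : 0 < r)
  have hle : U r ≤ U 0 := (hu.strictAntiOn_profile he hU).antitoneOn Set.self_mem_Ici hr.le hr.le
  have hpos : 0 < U r := hu.profile_pos he hU hr.le
  rw [norm_one, mul_one, Real.norm_of_nonneg (by unfold diffusionCoeff; positivity)]
  unfold diffusionCoeff
  gcongr

lemma profile_equation (hu : IsGroundState N ω p u) (he : ‖e‖ = 1) (hU : ∀ x, u x = U ‖x‖)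
    (hr : 0 < r) :
    -lapRad N U r - U r * lapRad N (fun s => U s ^ 2) r + ω * U r - U r ^ p = 0 := by
  obtain rfl : u = fun x => U ‖x‖ := funext hU
  have hnorm : ‖r • e‖ = r := by rw [norm_smul, he, mul_one, Real.norm_of_nonneg hr.le]
  have hne : r • e ≠ 0 := norm_ne_zero_iff.1 (hnorm.trans_ne hr.ne')
  have hU₂ : ContDiffAt ℝ 2 U ‖r • e‖ := by
    rw [hnorm]
    exact (hu.contDiffOn_profile he hU 2).contDiffAt (Ioi_mem_nhds hr)
  have hsolves := hu.solves (r • e)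
  rw [lap_comp_norm hne hU₂, lap_comp_norm (h := fun s => U s ^ 2) hne (hU₂.pow 2), hnorm]
    at hsolves
  exact hsolves

lemma radialOp_deriv_profile_eq_zero (hu : IsGroundState N ω p u) (he : ‖e‖ = 1)
    (hU : ∀ x, u x = U ‖x‖) (hr : 0 < r) :
    radialOp N (diffusionCoeff U) (potentialCoeff N ω p U) (N - 1) (deriv U) r = 0 :=
  radialOp_deriv_eq_zero hr.ne' ((hu.contDiffOn_profile he hU 3).contDiffAt (Ioi_mem_nhds hr))
    (hu.profile_pos he hU hr.le).ne'
    (eventually_of_mem (Ioi_mem_nhds hr) fun _ hs => hu.profile_equation he hU hs)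

end IsGroundState

lemma exists_norm_eq_one_euclideanSpace {N : ℕ} (hN : 0 < N) :
    ∃ e : EuclideanSpace ℝ (Fin N), ‖e‖ = 1 :=
  ⟨EuclideanSpace.single ⟨0, hN⟩ 1, by simp⟩

lemma sub_one_lt_angularEigenvalue {N k : ℕ} (hN : 1 ≤ N) (hk : 2 ≤ k) :
    (N : ℝ) - 1 < k * (N + k - 2) := by
  have hN' : (1 : ℝ) ≤ N := mod_cast hN
  have hk' : (2 : ℝ) ≤ k := mod_cast hk
  nlinarith

theorem stmt9_general {N : ℕ} (hN : 2 ≤ N) {ω p : ℝ} {u : EuclideanSpace ℝ (Fin N) → ℝ}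
    {U : ℝ → ℝ} (hu : IsGroundState N ω p u) (hU : ∀ x, u x = U ‖x‖) {lam : ℝ}
    (hlam : (N : ℝ) - 1 < lam) {v : ℝ → ℝ} (hvc : ContinuousOn v (Set.Ici 0))
    (hv2 : ContDiffOn ℝ 2 v (Set.Ioi 0))
    (hint : IntegrableOn (radialEnergyDensity N v) (Set.Ioi 0))
    (heq : ∀ r, 0 < r →
      radialOp N (diffusionCoeff U) (potentialCoeff N ω p U) lam v r = 0) :
    ∀ r, 0 ≤ r → v r = 0 := by
  obtain ⟨e, he⟩ := exists_norm_eq_one_euclideanSpace (by omega : 0 < N)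
  have hv_zero : v =O[𝓝[>] 0] fun _ => (1 : ℝ) :=
    ((hvc 0 Set.self_mem_Ici).mono Set.Ioi_subset_Ici_self).isBigO_one ℝ
  have hv_eqOn : Set.EqOn v 0 {r | 0 < r ∧ deriv U r ≠ 0} := fun r hr =>
    eq_zero_of_radialOp_eq_zero_of_nonpos_solution hN hlam
      (fun s hs => (hasDerivAt_diffusionCoeff
        (hu.differentiableAt_profile he hU hs)).differentiableAt.differentiableWithinAt)
      (fun s _ => by unfold diffusionCoeff; positivity)
      (hu.diffusionCoeff_isBigO_one he hU self_mem_nhdsWithin)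
      (hu.diffusionCoeff_isBigO_one he hU (Ioi_mem_atTop 0)) hv2 hv_zero hint heq
      (hu.contDiffOn_deriv_profile he hU) (fun s hs => hu.deriv_profile_nonpos he hU hs)
      (deriv_radialProfile_isBigO_id he hU (hu.contDiff 2) hu.isLocalMax_zero)
      (hu.deriv_deriv_profile_isBigO_one he hU)
      (hu.integrableOn_radialEnergyDensity_deriv_profile he hU)
      (fun s hs => hu.radialOp_deriv_profile_eq_zero he hU hs) hr.1 hr.2
  have hdense : Set.Ici 0 ⊆ closure {r | 0 < r ∧ deriv U r ≠ 0} :=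
    Ici_subset_closure_deriv_ne_zero
      ((hu.strictAntiOn_profile he hU).injOn.mono Set.Ioi_subset_Ici_self)
      fun r hr => (hu.differentiableAt_profile he hU hr).differentiableWithinAt
  exact hv_eqOn.of_subset_closure hvc continuousOn_const (fun r hr => hr.1.le) hdense

/-- For `k ≥ 2`, a finite-energy solution of the radial linearized equation `L₊,ₖ v = 0` vanishes identically. -/
theorem stmt9 (N : ℕ) (hN : 2 ≤ N) (ω p : ℝ) (hω : 0 < ω) (hp : 1 < p)
    (hpmax : 3 ≤ N → p < (3 * (N : ℝ) + 2) / ((N : ℝ) - 2))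
    (u : EuclideanSpace ℝ (Fin N) → ℝ) (U : ℝ → ℝ)
    (hu : IsGroundState N ω p u)
    (hU : StrictAntiOn U (Set.Ici 0) ∧ (∀ r, 0 ≤ r → 0 < U r) ∧ ∀ x, u x = U ‖x‖)
    (k : ℕ) (hk : 2 ≤ k)
    (v : ℝ → ℝ) (hvc : ContinuousOn v (Set.Ici 0)) (hv2 : ContDiffOn ℝ 2 v (Set.Ioi 0))
    (hint : IntegrableOn (fun r => ((v r) ^ 2 + (deriv v r) ^ 2) * r ^ (N - 1)) (Set.Ioi 0))
    (heq : ∀ r ∈ Set.Ioi (0 : ℝ), LplusRad N ω p U k v r = 0) :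
    ∀ r, 0 ≤ r → v r = 0 := by
  obtain ⟨e, he⟩ := exists_norm_eq_one_euclideanSpace (by omega : 0 < N)
  refine stmt9_general hN hu hU.2.2 (sub_one_lt_angularEigenvalue (by omega) hk) hvc hv2 hint
    fun r hr => ?_
  rw [← LplusRad_eq_radialOp N k ω p v (hu.differentiableAt_profile he hU.2.2 hr)]
  exact heq r hr

end
end

section
/- Let ω > 0 and p > 1. Let u : ℝ² → ℝ be a smooth positive function solving (QLS) pointwise on ℝ², and assume u and all its partial derivatives up to order two decay exponentially: there exist C, δ > 0 with |∂^α u(x)| ≤ C e^{−δ|x|} for every multi-index α with |α| ≤ 2 and every x ∈ ℝ². Then the Pohozaev-type identity holds: ω ∫_{ℝ²} u² dx = (2/(p+1)) ∫_{ℝ²} u^{p+1} dx. -/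
open MeasureTheory Real Filter Topology

noncomputable section

/-!
Write `(QLS)` as `a(u) Δu + ½ a'(u) |∇u|² = F'(u)` with `a(s) = 1 + 2s²` and
`F(s) = ω s² / 2 - s ^ (p + 1) / (p + 1)`. This is the Euler-Lagrange equation of the energy density
`e = ½ a(u) |∇u|² + F(u)`, so the stress tensor `T i j = a(u) ∂ᵢu ∂ⱼu - δᵢⱼ e` is divergence free.
Pairing its divergence with the position field `x` and integrating by parts gives `∫ tr T = 0`.
Since `tr T = (1 - N / 2) a(u) |∇u|² - N F(u)` in dimension `N`, the gradient term drops out for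
`N = 2`, leaving `∫ F(u) = 0`.
-/

open Asymptotics

section ExpDecay

variable {E F : Type*} [NormedAddCommGroup E] [NormedAddCommGroup F]

/-- Exponential decay at rate `δ`, uniformly on the whole space: the filter is `⊤`, so the bound
`‖f x‖ ≤ C * exp (-δ * ‖x‖)` holds for every `x` and not just near infinity. -/
def ExpDecay (δ : ℝ) (f : E → F) : Prop :=
  f =O[⊤] fun x => exp (-δ * ‖x‖)

variable {δ : ℝ}

lemma isBigO_top_one_comp {α : Type*} [ProperSpace E] {g : E → F} {f : α → E}
    (hg : Continuous g) (hf : f =O[⊤] fun _ => (1 : ℝ)) :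
    (fun x => g (f x)) =O[⊤] fun _ => (1 : ℝ) := by
  obtain ⟨R, hR⟩ := isBigO_top.1 hf
  obtain ⟨C, hC⟩ := (isCompact_closedBall (0 : E) R).exists_bound_of_continuousOn hg.continuousOn
  refine isBigO_top.2 ⟨C, fun x => ?_⟩
  simpa using hC (f x) (by simpa using hR x)

lemma ExpDecay.mono {G : Type*} [NormedAddCommGroup G] {f : E → F} {g : E → G}
    (hg : ExpDecay δ g) (hfg : ∀ x, ‖f x‖ ≤ ‖g x‖) : ExpDecay δ f :=
  (isBigO_of_le ⊤ hfg).trans hg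

lemma ExpDecay.isBigO_one {f : E → F} (hf : ExpDecay δ f) (hδ : 0 < δ) :
    f =O[⊤] fun _ => (1 : ℝ) := by
  refine hf.trans (isBigO_of_le ⊤ fun x => ?_)
  simpa using mul_nonneg hδ.le (norm_nonneg x)

lemma ExpDecay.add {f g : E → F} (hf : ExpDecay δ f) (hg : ExpDecay δ g) :
    ExpDecay δ fun x => f x + g x :=
  IsBigO.add hf hg

lemma ExpDecay.sub {f g : E → F} (hf : ExpDecay δ f) (hg : ExpDecay δ g) :
    ExpDecay δ fun x => f x - g x :=
  IsBigO.sub hf hg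

lemma ExpDecay.sum {ι : Type*} {s : Finset ι} {f : ι → E → F} (hf : ∀ i ∈ s, ExpDecay δ (f i)) :
    ExpDecay δ fun x => ∑ i ∈ s, f i x :=
  IsBigO.fun_sum hf

lemma ExpDecay.bounded_mul {f g : E → ℝ} (hg : ExpDecay δ g)
    (hf : f =O[⊤] fun _ => (1 : ℝ)) : ExpDecay δ fun x => f x * g x := by
  simpa only [ExpDecay, one_mul] using hf.mul hg

lemma ExpDecay.const_mul {f : E → ℝ} (hf : ExpDecay δ f) (c : ℝ) : ExpDecay δ fun x => c * f x :=
  IsBigO.const_mul_left hf c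

lemma ExpDecay.mul {f g : E → ℝ} (hf : ExpDecay δ f) (hg : ExpDecay δ g) (hδ : 0 < δ) :
    ExpDecay δ fun x => f x * g x :=
  hg.bounded_mul (hf.isBigO_one hδ)

variable [NormedSpace ℝ E]

lemma clm_mul_exp_neg_isBigO_one (L : E →L[ℝ] ℝ) (hδ : 0 < δ) :
    (fun x => L x * exp (-δ * ‖x‖)) =O[⊤] fun _ => (1 : ℝ) := by
  refine isBigO_top.2 ⟨‖L‖ * (exp (-1) / δ), fun x => ?_⟩
  have hexp : ‖x‖ * exp (-δ * ‖x‖) ≤ exp (-1) / δ := by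
    rw [le_div_iff₀ hδ]
    calc ‖x‖ * exp (-δ * ‖x‖) * δ = δ * ‖x‖ * exp (-(δ * ‖x‖)) := by rw [neg_mul]; ring
      _ ≤ exp (-1) := mul_exp_neg_le_exp_neg_one _
  calc ‖L x * exp (-δ * ‖x‖)‖ = ‖L x‖ * exp (-δ * ‖x‖) := by
        rw [norm_mul, norm_of_nonneg (exp_nonneg _)]
    _ ≤ ‖L‖ * ‖x‖ * exp (-δ * ‖x‖) := by gcongr; exact L.le_opNorm x
    _ = ‖L‖ * (‖x‖ * exp (-δ * ‖x‖)) := by ring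
    _ ≤ ‖L‖ * (exp (-1) / δ) * ‖(1 : ℝ)‖ := by rw [norm_one, mul_one]; gcongr

lemma ExpDecay.clm_mul {f : E → ℝ} (hf : ExpDecay δ f) (L : E →L[ℝ] ℝ) (hδ : 0 < δ) :
    ExpDecay (δ / 2) fun x => L x * f x := by
  have hLf : (fun x => L x * f x) =O[⊤] fun x => L x * exp (-δ * ‖x‖) :=
    (isBigO_refl (fun x => L x) ⊤).mul hf
  have hsplit : ∀ x : E, L x * exp (-δ * ‖x‖) =
      L x * exp (-(δ / 2) * ‖x‖) * exp (-(δ / 2) * ‖x‖) := fun x => by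
    rw [mul_assoc, ← exp_add]
    ring_nf
  simp only [hsplit] at hLf
  exact hLf.trans (ExpDecay.bounded_mul (isBigO_refl _ ⊤)
    (clm_mul_exp_neg_isBigO_one L (half_pos hδ)))

variable [FiniteDimensional ℝ E] [MeasurableSpace E] [BorelSpace E] {μ : Measure E}
  [μ.IsAddHaarMeasure]

lemma integrable_exp_neg_mul_norm (hδ : 0 < δ) : Integrable (fun x : E => exp (-δ * ‖x‖)) μ := by
  set r : ℝ := Module.finrank ℝ E + 1
  have hshift : ∀ x : E, exp (-δ * ‖x‖) = exp δ * exp (-δ * (1 + ‖x‖)) := fun x => by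
    rw [← exp_add]
    ring_nf
  have hO : (fun x : E => exp (-δ * ‖x‖)) =O[cocompact E] fun x => (1 + ‖x‖) ^ (-r) := by
    simp only [hshift]
    exact ((isLittleO_exp_neg_mul_rpow_atTop hδ (-r)).comp_tendsto
      (tendsto_atTop_add_const_left _ 1 tendsto_norm_cocompact_atTop)).isBigO.const_mul_left _
  have hcont : Continuous fun x : E => exp (-δ * ‖x‖) := by fun_prop
  exact hcont.locallyIntegrable.integrable_of_isBigO_cocompact hO
    ((integrable_one_add_norm (lt_add_one _)).integrableAtFilter _)

lemma ExpDecay.integrable {f : E → F} (hf : ExpDecay δ f) (hδ : 0 < δ)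
    (hfm : AEStronglyMeasurable f μ) : Integrable f μ :=
  IsBigO.integrable hfm hf (integrable_exp_neg_mul_norm hδ)

lemma ExpDecay.integrable_clm_mul {f : E → ℝ} (hf : ExpDecay δ f) (hδ : 0 < δ)
    (hfm : AEStronglyMeasurable f μ) (L : E →L[ℝ] ℝ) : Integrable (fun x => L x * f x) μ :=
  (hf.clm_mul L hδ).integrable (half_pos hδ) (L.continuous.aestronglyMeasurable.mul hfm)

end ExpDecay

section PartialDerivatives

variable {N : ℕ} {x : EuclideanSpace ℝ (Fin N)}

section VectorValued

variable {F : Type*} [NormedAddCommGroup F] [NormedSpace ℝ F]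
  {f g u : EuclideanSpace ℝ (Fin N) → F}

lemma pd_add (hf : DifferentiableAt ℝ f x) (hg : DifferentiableAt ℝ g x) (i : Fin N) :
    pd i (fun y => f y + g y) x = pd i f x + pd i g x := by
  simp [pd, fderiv_fun_add hf hg]

lemma pd_sub (hf : DifferentiableAt ℝ f x) (hg : DifferentiableAt ℝ g x) (i : Fin N) :
    pd i (fun y => f y - g y) x = pd i f x - pd i g x := by
  simp [pd, fderiv_fun_sub hf hg]

lemma pd_sum {ι : Type*} {s : Finset ι} {f : ι → EuclideanSpace ℝ (Fin N) → F}
    (hf : ∀ l ∈ s, DifferentiableAt ℝ (f l) x) (i : Fin N) :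
    pd i (fun y => ∑ l ∈ s, f l y) x = ∑ l ∈ s, pd i (f l) x := by
  simp [pd, fderiv_fun_sum hf]

lemma differentiable_fderiv_of_contDiff_two (hu : ContDiff ℝ 2 u) :
    Differentiable ℝ (fderiv ℝ u) :=
  (hu.fderiv_right (m := 1) (by norm_num)).differentiable one_ne_zero

lemma differentiable_pd (hu : ContDiff ℝ 2 u) (i : Fin N) : Differentiable ℝ (pd i u) :=
  (differentiable_fderiv_of_contDiff_two hu).clm_apply (differentiable_const _)

lemma pd_pd_eq_fderiv_fderiv (hu : ContDiff ℝ 2 u) (i j : Fin N) (x : EuclideanSpace ℝ (Fin N)) :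
    pd i (pd j u) x =
      fderiv ℝ (fderiv ℝ u) x (EuclideanSpace.single i 1) (EuclideanSpace.single j 1) := by
  have hD := (differentiable_fderiv_of_contDiff_two hu x).hasFDerivAt.clm_apply
    (hasFDerivAt_const (EuclideanSpace.single j (1 : ℝ)) x)
  unfold pd
  simp [hD.fderiv]

lemma pd_comm (hu : ContDiff ℝ 2 u) (i j : Fin N) (x : EuclideanSpace ℝ (Fin N)) :
    pd i (pd j u) x = pd j (pd i u) x := by
  have hsymm : IsSymmSndFDerivAt ℝ u x := hu.contDiffAt.isSymmSndFDerivAt (by simp)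
  rw [pd_pd_eq_fderiv_fderiv hu, pd_pd_eq_fderiv_fderiv hu, hsymm.eq]

lemma norm_pd_le_norm_iteratedFDeriv_one (u : EuclideanSpace ℝ (Fin N) → F) (i : Fin N)
    (x : EuclideanSpace ℝ (Fin N)) : ‖pd i u x‖ ≤ ‖iteratedFDeriv ℝ 1 u x‖ := by
  simpa [pd, norm_iteratedFDeriv_one] using (fderiv ℝ u x).le_opNorm (EuclideanSpace.single i 1)

lemma norm_pd_pd_le_norm_iteratedFDeriv_two (hu : ContDiff ℝ 2 u) (i j : Fin N)
    (x : EuclideanSpace ℝ (Fin N)) : ‖pd i (pd j u) x‖ ≤ ‖iteratedFDeriv ℝ 2 u x‖ := by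
  have hle := (iteratedFDeriv ℝ 2 u x).le_opNorm
    ![EuclideanSpace.single i 1, EuclideanSpace.single j 1]
  rw [iteratedFDeriv_two_apply] at hle
  simpa [pd_pd_eq_fderiv_fderiv hu] using hle

end VectorValued

variable {f g u : EuclideanSpace ℝ (Fin N) → ℝ}

lemma pd_mul (hf : DifferentiableAt ℝ f x) (hg : DifferentiableAt ℝ g x) (i : Fin N) :
    pd i (fun y => f y * g y) x = pd i f x * g x + f x * pd i g x := by
  simp only [pd, fderiv_fun_mul hf hg, add_apply, smul_apply, smul_eq_mul]
  ring

lemma pd_const_mul (hf : DifferentiableAt ℝ f x) (c : ℝ) (i : Fin N) :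
    pd i (fun y => c * f y) x = c * pd i f x := by
  simp [pd, fderiv_const_mul hf]

lemma pd_comp {φ : ℝ → ℝ} (hφ : DifferentiableAt ℝ φ (f x)) (hf : DifferentiableAt ℝ f x)
    (i : Fin N) : pd i (fun y => φ (f y)) x = deriv φ (f x) * pd i f x := by
  have hcomp := hφ.hasDerivAt.comp_hasFDerivAt x hf.hasFDerivAt
  exact congrArg (· (EuclideanSpace.single i 1)) hcomp.fderiv

lemma pd_sq (hf : DifferentiableAt ℝ f x) (i : Fin N) :
    pd i (fun y => f y ^ 2) x = 2 * (f x * pd i f x) := by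
  simp only [pow_two, pd_mul hf hf]
  ring

lemma measurable_pd (f : EuclideanSpace ℝ (Fin N) → ℝ) (i : Fin N) : Measurable (pd i f) :=
  measurable_fderiv_apply_const ℝ f _

lemma differentiable_gradsq (hu : ContDiff ℝ 2 u) : Differentiable ℝ (gradsq u) :=
  Differentiable.fun_sum fun i _ => (differentiable_pd hu i).pow 2

lemma pd_gradsq (hu : ContDiff ℝ 2 u) (k : Fin N) (x : EuclideanSpace ℝ (Fin N)) :
    pd k (gradsq u) x = 2 * ∑ l, pd l u x * pd k (pd l u) x := by
  unfold gradsq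
  rw [pd_sum fun l _ => (differentiable_pd hu l x).fun_pow 2, Finset.mul_sum]
  exact Finset.sum_congr rfl fun l _ => pd_sq (differentiable_pd hu l x) k

lemma lap_sq (hu : ContDiff ℝ 2 u) (x : EuclideanSpace ℝ (Fin N)) :
    lap (fun y => u y ^ 2) x = 2 * u x * lap u x + 2 * gradsq u x := by
  have hdiff : Differentiable ℝ u := hu.differentiable two_ne_zero
  have hpd_sq : ∀ i, pd i (fun y => u y ^ 2) = fun y => 2 * (u y * pd i u y) :=
    fun i => funext fun y => pd_sq (hdiff y) i
  have hpd_pd_sq : ∀ i, pd i (pd i fun y => u y ^ 2) x =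
      2 * u x * pd i (pd i u) x + 2 * pd i u x ^ 2 := fun i => by
    rw [hpd_sq, pd_const_mul ((hdiff x).fun_mul (differentiable_pd hu i x)),
      pd_mul (hdiff x) (differentiable_pd hu i x)]
    ring
  simp only [lap, gradsq, hpd_pd_sq, Finset.sum_add_distrib, Finset.mul_sum]

end PartialDerivatives

section Virial

lemma integral_clm_mul_fderiv_apply {E : Type*} [NormedAddCommGroup E] [NormedSpace ℝ E]
    [FiniteDimensional ℝ E] [MeasurableSpace E] [BorelSpace E] {μ : Measure E}
    [μ.IsAddHaarMeasure] (L : E →L[ℝ] ℝ) (v : E) {f : E → ℝ} (hf : Differentiable ℝ f)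
    (hfi : Integrable f μ) (hLf : Integrable (fun x => L x * f x) μ)
    (hLf' : Integrable (fun x => L x * fderiv ℝ f x v) μ) :
    ∫ x, L x * fderiv ℝ f x v ∂μ = -(L v * ∫ x, f x ∂μ) := by
  have hL : ∀ x, fderiv ℝ (fun y => L y) x v = L v := fun x => by rw [L.hasFDerivAt.fderiv]
  rw [integral_mul_fderiv_eq_neg_fderiv_mul_of_integrable (by simpa only [hL] using hfi.const_mul _)
    hLf' hLf (fun x _ => L.differentiableAt) fun x _ => hf x]
  simp only [hL, integral_const_mul]

variable {N : ℕ}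

lemma integral_trace_eq_zero_of_divergence_eq_zero
    {T : Fin N → Fin N → EuclideanSpace ℝ (Fin N) → ℝ} (hT : ∀ i j, Differentiable ℝ (T i j))
    (hint : ∀ i j, Integrable (T i j)) (hxT : ∀ i j, Integrable fun x => x j * T i j x)
    (hxT' : ∀ i j, Integrable fun x => x j * pd i (T i j) x)
    (hdiv : ∀ j x, ∑ i, pd i (T i j) x = 0) :
    ∫ x, ∑ i, T i i x = 0 := by
  have hparts : ∀ i j, ∫ x, x j * pd i (T i j) x = -((if i = j then 1 else 0) * ∫ x, T i j x) :=
    fun i j => by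
      have := integral_clm_mul_fderiv_apply (EuclideanSpace.proj j) (EuclideanSpace.single i 1)
        (hT i j) (hint i j) (hxT i j) (hxT' i j)
      simpa [pd, Pi.single_apply, eq_comm] using this
  calc ∫ x, ∑ i, T i i x = ∑ j, ∑ i, (if i = j then 1 else 0) * ∫ x, T i j x := by
        rw [integral_finsetSum _ fun i _ => hint i i]
        simp
    _ = -∑ j, ∑ i, ∫ x, x j * pd i (T i j) x := by simp [hparts]
    _ = -∑ j, ∫ x, x j * ∑ i, pd i (T i j) x := by
        simp only [Finset.mul_sum]
        simp only [integral_finsetSum _ fun i _ => hxT' i _]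
    _ = 0 := by simp [hdiv]

end Virial

section Pohozaev

variable {N : ℕ} {a F : ℝ → ℝ} {u : EuclideanSpace ℝ (Fin N) → ℝ}

/-- The Lagrangian density `½ a(u) |∇u|² + F(u)`, whose Euler-Lagrange equation is
`a(u) Δu + ½ a'(u) |∇u|² = F'(u)`. -/
def energyDensity (a F : ℝ → ℝ) (u : EuclideanSpace ℝ (Fin N) → ℝ)
    (x : EuclideanSpace ℝ (Fin N)) : ℝ :=
  1 / 2 * (a (u x) * gradsq u x) + F (u x)

/-- The stress tensor `a(u) ∂ᵢu ∂ⱼu - δᵢⱼ e` of the energy density `e`. -/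
def stressTensor (a F : ℝ → ℝ) (u : EuclideanSpace ℝ (Fin N) → ℝ) (i j : Fin N)
    (x : EuclideanSpace ℝ (Fin N)) : ℝ :=
  a (u x) * (pd i u x * pd j u x) - (if i = j then 1 else 0) * energyDensity a F u x

lemma sum_stressTensor_diag (x : EuclideanSpace ℝ (Fin N)) :
    ∑ i, stressTensor a F u i i x = (1 - N / 2) * (a (u x) * gradsq u x) - N * F (u x) := by
  have hgrad : ∑ i, a (u x) * (pd i u x * pd i u x) = a (u x) * gradsq u x := by
    simp only [gradsq, Finset.mul_sum, pow_two]
  simp only [stressTensor, energyDensity, Finset.sum_sub_distrib, hgrad, if_true, Finset.sum_const,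
    Finset.card_univ, Fintype.card_fin, nsmul_eq_mul]
  ring

section Derivatives

variable (ha : Differentiable ℝ a) (hF : ∀ x, DifferentiableAt ℝ F (u x)) (hu : ContDiff ℝ 2 u)
include ha hF hu

lemma differentiable_energyDensity : Differentiable ℝ (energyDensity a F u) := by
  have hdiff : Differentiable ℝ u := hu.differentiable two_ne_zero
  exact (((ha.comp hdiff).mul (differentiable_gradsq hu)).const_mul _).add
    fun x => (hF x).comp x (hdiff x)

lemma differentiable_stressTensor (i j : Fin N) : Differentiable ℝ (stressTensor a F u i j) :=
  ((ha.comp (hu.differentiable two_ne_zero)).mul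
    ((differentiable_pd hu i).mul (differentiable_pd hu j))).sub
      ((differentiable_energyDensity ha hF hu).const_mul _)

lemma pd_energyDensity (k : Fin N) (x : EuclideanSpace ℝ (Fin N)) :
    pd k (energyDensity a F u) x = 1 / 2 * (deriv a (u x) * pd k u x * gradsq u x) +
      a (u x) * ∑ l, pd l u x * pd k (pd l u) x + deriv F (u x) * pd k u x := by
  have hux : DifferentiableAt ℝ u x := hu.differentiable two_ne_zero x
  have hau : DifferentiableAt ℝ (fun y => a (u y)) x := (ha _).comp x hux
  have hFu : DifferentiableAt ℝ (fun y => F (u y)) x := (hF x).comp x hux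
  have hgrad := differentiable_gradsq hu x
  unfold energyDensity
  rw [pd_add ((hau.fun_mul hgrad).const_mul _) hFu,
    pd_const_mul (hau.fun_mul hgrad),
    pd_mul hau hgrad, pd_comp (ha _) hux, pd_comp (hF x) hux, pd_gradsq hu]
  ring

lemma pd_stressTensor (k i j : Fin N) (x : EuclideanSpace ℝ (Fin N)) :
    pd k (stressTensor a F u i j) x = deriv a (u x) * pd k u x * (pd i u x * pd j u x) +
      a (u x) * (pd k (pd i u) x * pd j u x + pd i u x * pd k (pd j u) x) -
      (if i = j then 1 else 0) * pd k (energyDensity a F u) x := by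
  have hux : DifferentiableAt ℝ u x := hu.differentiable two_ne_zero x
  have hau : DifferentiableAt ℝ (fun y => a (u y)) x := (ha _).comp x hux
  have hi := differentiable_pd hu i x
  have hj := differentiable_pd hu j x
  have he := differentiable_energyDensity ha hF hu x
  unfold stressTensor
  rw [pd_sub (hau.fun_mul (hi.fun_mul hj)) (he.const_mul _), pd_const_mul he,
    pd_mul hau (hi.fun_mul hj), pd_mul hi hj, pd_comp (ha _) hux]

lemma divergence_stressTensor (j : Fin N) (x : EuclideanSpace ℝ (Fin N)) :
    ∑ i, pd i (stressTensor a F u i j) x =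
      (a (u x) * lap u x + deriv a (u x) / 2 * gradsq u x - deriv F (u x)) * pd j u x := by
  have hgrad : ∑ i, deriv a (u x) * pd i u x * (pd i u x * pd j u x) =
      deriv a (u x) * gradsq u x * pd j u x := by
    simp only [gradsq, Finset.mul_sum, Finset.sum_mul]
    exact Finset.sum_congr rfl fun i _ => by ring
  have hhess : ∑ i, a (u x) * (pd i (pd i u) x * pd j u x + pd i u x * pd i (pd j u) x) =
      a (u x) * lap u x * pd j u x + a (u x) * ∑ i, pd i u x * pd j (pd i u) x := by
    simp only [lap, Finset.mul_sum, Finset.sum_mul, ← Finset.sum_add_distrib]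
    exact Finset.sum_congr rfl fun i _ => by rw [pd_comm hu i j]; ring
  simp only [pd_stressTensor ha hF hu, Finset.sum_sub_distrib, Finset.sum_add_distrib, hgrad, hhess,
    ite_mul, one_mul, zero_mul, Finset.sum_ite_eq', Finset.mem_univ, if_true,
    pd_energyDensity ha hF hu]
  ring

end Derivatives

section Decay

variable {δ : ℝ} (hδ : 0 < δ) (hbdd : u =O[⊤] fun _ => (1 : ℝ))
  (hpd : ∀ i, ExpDecay δ (pd i u))
include hδ hpd

lemma expDecay_gradsq : ExpDecay δ (gradsq u) :=
  ExpDecay.sum fun i _ => by simpa only [pow_two] using (hpd i).mul (hpd i) hδ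

include hbdd

lemma expDecay_energyDensity (ha : Continuous a) (hFu : ExpDecay δ fun x => F (u x)) :
    ExpDecay δ (energyDensity a F u) :=
  (((expDecay_gradsq hδ hpd).bounded_mul (isBigO_top_one_comp ha hbdd)).const_mul _).add hFu

lemma expDecay_stressTensor (ha : Continuous a) (hFu : ExpDecay δ fun x => F (u x))
    (i j : Fin N) : ExpDecay δ (stressTensor a F u i j) :=
  (((hpd i).mul (hpd j) hδ).bounded_mul (isBigO_top_one_comp ha hbdd)).sub
    ((expDecay_energyDensity hδ hbdd hpd ha hFu).const_mul _)

variable (hpd2 : ∀ i j, ExpDecay δ (pd i (pd j u)))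
include hpd2

lemma expDecay_euler_lagrange (ha : ContDiff ℝ 1 a) :
    ExpDecay δ fun x => a (u x) * lap u x + deriv a (u x) / 2 * gradsq u x :=
  ((ExpDecay.sum fun i _ => hpd2 i i).bounded_mul (isBigO_top_one_comp ha.continuous hbdd)).add
    ((expDecay_gradsq hδ hpd).bounded_mul
      (isBigO_top_one_comp ((ha.continuous_deriv le_rfl).div_const 2) hbdd))

variable (ha : ContDiff ℝ 1 a) (hF : ∀ x, DifferentiableAt ℝ F (u x)) (hu : ContDiff ℝ 2 u)
  (hF'u : ExpDecay δ fun x => deriv F (u x))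
include ha hF hu hF'u

lemma expDecay_pd_energyDensity (k : Fin N) : ExpDecay δ (pd k (energyDensity a F u)) := by
  have ha' := isBigO_top_one_comp (ha.continuous_deriv le_rfl) hbdd
  rw [funext (pd_energyDensity (ha.differentiable one_ne_zero) hF hu k)]
  exact (((((hpd k).bounded_mul ha').mul (expDecay_gradsq hδ hpd) hδ).const_mul _).add
    ((ExpDecay.sum fun l _ => (hpd l).mul (hpd2 k l) hδ).bounded_mul
      (isBigO_top_one_comp ha.continuous hbdd))).add (hF'u.mul (hpd k) hδ)

lemma expDecay_pd_stressTensor (k i j : Fin N) :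
    ExpDecay δ (pd k (stressTensor a F u i j)) := by
  have ha' := isBigO_top_one_comp (ha.continuous_deriv le_rfl) hbdd
  rw [funext (pd_stressTensor (ha.differentiable one_ne_zero) hF hu k i j)]
  exact ((((hpd k).bounded_mul ha').mul ((hpd i).mul (hpd j) hδ) hδ).add
    ((((hpd2 k i).mul (hpd j) hδ).add ((hpd i).mul (hpd2 k j) hδ)).bounded_mul
      (isBigO_top_one_comp ha.continuous hbdd))).sub
    ((expDecay_pd_energyDensity hδ hbdd hpd hpd2 ha hF hu hF'u k).const_mul _)

end Decay

theorem pohozaev_identity {δ : ℝ} (hδ : 0 < δ) (ha : ContDiff ℝ 1 a)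
    (hF : ∀ x, DifferentiableAt ℝ F (u x)) (hu : ContDiff ℝ 2 u)
    (heq : ∀ x, a (u x) * lap u x + deriv a (u x) / 2 * gradsq u x = deriv F (u x))
    (hbdd : u =O[⊤] fun _ => (1 : ℝ)) (hpd : ∀ i, ExpDecay δ (pd i u))
    (hpd2 : ∀ i j, ExpDecay δ (pd i (pd j u))) (hFu : ExpDecay δ fun x => F (u x)) :
    (1 - N / 2 : ℝ) * ∫ x, a (u x) * gradsq u x = N * ∫ x, F (u x) := by
  have ha1 : Differentiable ℝ a := ha.differentiable one_ne_zero
  have hdiff : Differentiable ℝ u := hu.differentiable two_ne_zero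
  have hF'u : ExpDecay δ fun x => deriv F (u x) := by
    simpa only [heq] using expDecay_euler_lagrange hδ hbdd hpd hpd2 ha
  have hT := differentiable_stressTensor ha1 hF hu
  have hTm := fun i j => (hT i j).continuous.aestronglyMeasurable (μ := volume)
  have hTdec := expDecay_stressTensor hδ hbdd hpd ha.continuous hFu
  have htrace : ∫ x, ∑ i, stressTensor a F u i i x = 0 :=
    integral_trace_eq_zero_of_divergence_eq_zero hT
      (fun i j => (hTdec i j).integrable hδ (hTm i j))
      (fun i j => (hTdec i j).integrable_clm_mul hδ (hTm i j) (EuclideanSpace.proj j))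
      (fun i j => (expDecay_pd_stressTensor hδ hbdd hpd hpd2 ha hF hu hF'u i i j).integrable_clm_mul
        hδ (measurable_pd _ i).aestronglyMeasurable (EuclideanSpace.proj j))
      (fun j x => by rw [divergence_stressTensor ha1 hF hu, heq, sub_self, zero_mul])
  have hgrad : Integrable fun x => a (u x) * gradsq u x :=
    ((expDecay_gradsq hδ hpd).bounded_mul (isBigO_top_one_comp ha.continuous hbdd)).integrable hδ
      ((ha1.comp hdiff).mul (differentiable_gradsq hu)).continuous.aestronglyMeasurable
  have hpot : Integrable fun x => F (u x) := hFu.integrable hδ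
    (Differentiable.continuous fun x => (hF x).comp x (hdiff x)).aestronglyMeasurable
  simp only [sum_stressTensor_diag] at htrace
  rw [integral_sub (hgrad.const_mul _) (hpot.const_mul _), integral_const_mul,
    integral_const_mul] at htrace
  exact sub_eq_zero.1 htrace

end Pohozaev

section QLS

lemma deriv_one_add_two_mul_sq (s : ℝ) : deriv (fun s : ℝ => 1 + 2 * s ^ 2) s = 4 * s := by
  have h : HasDerivAt (fun s : ℝ => 1 + 2 * s ^ 2) (2 * ((2 : ℕ) * s ^ (2 - 1))) s :=
    ((hasDerivAt_pow 2 s).const_mul 2).const_add 1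
  rw [h.deriv]
  push_cast
  ring

/-- A primitive `F` of `s ↦ ω s - s ^ p` on `s > 0`, the potential that makes `(QLS)` the
Euler-Lagrange equation of an `energyDensity`. It is meaningful only for `p ≠ -1`. -/
def qlsPotential (ω p s : ℝ) : ℝ :=
  ω / 2 * s ^ 2 - 1 / (p + 1) * s ^ (p + 1)

lemma hasDerivAt_qlsPotential (ω : ℝ) {p s : ℝ} (hp : p ≠ -1) (hs : 0 < s) :
    HasDerivAt (qlsPotential ω p) (ω * s - s ^ p) s := by
  have hp1 : p + 1 ≠ 0 := fun h => hp (eq_neg_of_add_eq_zero_left h)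
  refine (((hasDerivAt_pow 2 s).const_mul (ω / 2)).fun_sub
    ((hasDerivAt_rpow_const (p := p + 1) (Or.inl hs.ne')).const_mul (1 / (p + 1)))).congr_deriv ?_
  rw [add_sub_cancel_right]
  field_simp
  push_cast
  ring

variable {N : ℕ} {ω p δ : ℝ} {u : EuclideanSpace ℝ (Fin N) → ℝ}

lemma qls_iff_euler_lagrange (hu : ContDiff ℝ 2 u) (x : EuclideanSpace ℝ (Fin N)) :
    -lap u x - u x * lap (fun y => u y ^ 2) x + ω * u x - u x ^ p = 0 ↔
      (1 + 2 * u x ^ 2) * lap u x + deriv (fun s : ℝ => 1 + 2 * s ^ 2) (u x) / 2 * gradsq u x =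
        ω * u x - u x ^ p := by
  rw [lap_sq hu, deriv_one_add_two_mul_sq]
  constructor <;> intro h <;> linarith

lemma integral_qlsPotential (hδ : 0 < δ) (hu : Continuous u) (hpos : ∀ x, 0 < u x)
    (hu2 : ExpDecay δ fun x => u x ^ 2) (hup1 : ExpDecay δ fun x => u x ^ (p + 1)) :
    ∫ x, qlsPotential ω p (u x) =
      ω / 2 * (∫ x, u x ^ 2) - 1 / (p + 1) * ∫ x, u x ^ (p + 1) := by
  have hcont : Continuous fun x => u x ^ (p + 1) :=
    hu.rpow_const fun x => Or.inl (hpos x).ne'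
  unfold qlsPotential
  rw [integral_sub ((hu2.integrable hδ (hu.pow 2).aestronglyMeasurable).const_mul _)
    ((hup1.integrable hδ hcont.aestronglyMeasurable).const_mul _), integral_const_mul,
    integral_const_mul]

theorem stmt13_general (hp : p ≠ -1) (hu : ContDiff ℝ 2 u) (hpos : ∀ x, 0 < u x)
    (hsol : ∀ x, -lap u x - u x * lap (fun y => u y ^ 2) x + ω * u x - u x ^ p = 0)
    (hδ : 0 < δ) (hdec : ∀ k ≤ 2, ExpDecay δ (iteratedFDeriv ℝ k u)) :
    (N - 2 : ℝ) * (∫ x, (1 + 2 * u x ^ 2) * gradsq u x) +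
      N * (ω * (∫ x, u x ^ 2) - 2 / (p + 1) * ∫ x, u x ^ (p + 1)) = 0 := by
  have ha : ContDiff ℝ 1 fun s : ℝ => 1 + 2 * s ^ 2 := by fun_prop
  have hF := fun x => hasDerivAt_qlsPotential ω hp (hpos x)
  have heq := fun x => (qls_iff_euler_lagrange hu x).1 (hsol x)
  have hu0 : ExpDecay δ u := (hdec 0 (by norm_num)).mono fun x => norm_iteratedFDeriv_zero.ge
  have hpd : ∀ i, ExpDecay δ (pd i u) := fun i =>
    (hdec 1 (by norm_num)).mono (norm_pd_le_norm_iteratedFDeriv_one u i)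
  have hpd2 : ∀ i j, ExpDecay δ (pd i (pd j u)) := fun i j =>
    (hdec 2 le_rfl).mono (norm_pd_pd_le_norm_iteratedFDeriv_two hu i j)
  have hbdd := hu0.isBigO_one hδ
  have hu2 : ExpDecay δ fun x => u x ^ 2 := by simpa only [pow_two] using hu0.mul hu0 hδ
  -- The equation itself controls `u ^ p`, whatever the exponent.
  have hup : ExpDecay δ fun x => u x ^ p := by
    simpa only [heq, sub_sub_cancel] using
      (hu0.const_mul ω).sub (expDecay_euler_lagrange hδ hbdd hpd hpd2 ha)
  have hup1 : ExpDecay δ fun x => u x ^ (p + 1) := by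
    simpa only [rpow_add_one (hpos _).ne'] using hup.mul hu0 hδ
  have hpohozaev := pohozaev_identity hδ ha (fun x => (hF x).differentiableAt) hu
    (fun x => (heq x).trans (hF x).deriv.symm) hbdd hpd hpd2
    ((hu2.const_mul (ω / 2)).sub (hup1.const_mul (1 / (p + 1))))
  rw [integral_qlsPotential hδ hu.continuous hpos hu2 hup1] at hpohozaev
  linear_combination -2 * hpohozaev

end QLS

/-- Pohozaev-type identity in dimension 2: `ω ∫ u² = (2/(p+1)) ∫ u^{p+1}`. -/
theorem stmt13 (ω p : ℝ) (hω : 0 < ω) (hp : 1 < p)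
    (u : EuclideanSpace ℝ (Fin 2) → ℝ) (hsm : ContDiff ℝ (⊤ : ℕ∞) u) (hpos : ∀ x, 0 < u x)
    (hsol : ∀ x, -lap u x - u x * lap (fun y => (u y) ^ 2) x + ω * u x - (u x) ^ p = 0)
    (hdec : ∃ C > 0, ∃ δ > 0, ∀ k : ℕ, k ≤ 2 → ∀ x,
      ‖iteratedFDeriv ℝ k u x‖ ≤ C * Real.exp (-δ * ‖x‖)) :
    ω * ∫ x, (u x) ^ 2 = (2 / (p + 1)) * ∫ x, u x ^ (p + 1) := by
  obtain ⟨C, -, δ, hδ, hbound⟩ := hdec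
  have hdec : ∀ k ≤ 2, ExpDecay δ (iteratedFDeriv ℝ k u) := fun k hk =>
    IsBigO.of_bound C (Eventually.of_forall fun x => by simpa using hbound k hk x)
  have hpohozaev := stmt13_general (by linarith) (contDiff_infty.1 hsm 2) hpos hsol hδ hdec
  push_cast at hpohozaev
  linarith

end
end
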